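/- Let n ≥ 1 and let X_{n+2} ⊂ ℙⁿ × ℙ³ be the hypersurface Σ_{i=0}^{3} l_i(x) y_i³ = 0, where l_0, …, l_3 are linear forms in x_0, …, x_n with rational coefficients any max(n+1,4) of which are linearly independent. Then the Picard group of X_{n+2} over an arbitrary field containing ℚ is isomorphic to ℤ ⊕ ℤ. -/

import Mathlib

/-!
**Statement 2.**  For `n ≥ 1` and the hypersurface `X_{n+2} ⊂ ℙⁿ × ℙ³` defined by
`P(x,y) = ∑ᵢ lᵢ(x) yᵢ³ = 0` (any `min (n+1) 4` of the rational linear forms `lᵢ` linearly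
independent), the Picard group of `X_{n+2}` over an arbitrary field containing `ℚ` is
isomorphic to `ℤ ⊕ ℤ`.

Formalization conventions:  `X_{n+2}` is smooth, so its Picard group (the group of
isomorphism classes of line bundles) coincides with its Weil divisor class group, which we
construct explicitly from the bihomogeneous coordinate ring:

* a *prime divisor* of `X_{n+2}` over `K` is a bihomogeneous relevant prime ideal `p` of
  `K[x₀,…,x_n,y₀,…,y₃]` containing `P` such that `p/(P)` has height 1;
* for a prime divisor `p`, the order of vanishing along `p` of a bihomogeneous form `f`
  not vanishing on `X` is `ord_p f = sup {m | f ∈ p⁽ᵐ⁾ mod (P)}` (the symbolic power,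
  i.e. `∃ s ∉ p, s·f ∈ pᵐ + (P)`); this is the normalized valuation of the discrete
  valuation ring `O_{X,p}`;
* the divisor class group is the quotient of the group `⨁_p ℤ` of divisors by the
  subgroup of principal divisors `div(f/g) = (ord_p f - ord_p g)_p`, for `f, g`
  bihomogeneous of the same bidegree and not vanishing identically on `X`.
-/

open MvPolynomial

noncomputable section

/-- `x`-variables have biweight `(1,0)`, `y`-variables `(0,1)`. -/
def biWeight (n : ℕ) : (Fin (n + 1) ⊕ Fin 4) → ℕ × ℕ :=
  Sum.elim (fun _ => ((1 : ℕ), (0 : ℕ))) (fun _ => ((0 : ℕ), (1 : ℕ)))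

/-- The defining polynomial `P(x,y) = ∑ᵢ lᵢ(x) yᵢ³` of `X_{n+2}`, over a field `K ⊇ ℚ`. -/
def cubicBundlePolyK (n : ℕ) (c : Fin 4 → Fin (n + 1) → ℚ) (K : Type*) [Field K]
    [CharZero K] : MvPolynomial (Fin (n + 1) ⊕ Fin 4) K :=
  ∑ i : Fin 4, (∑ j, C (algebraMap ℚ K (c i j)) * X (Sum.inl j)) * X (Sum.inr i) ^ 3

variable (n : ℕ) (c : Fin 4 → Fin (n + 1) → ℚ) (K : Type) [Field K] [CharZero K]

/-- A prime divisor of `X_{n+2}` over `K`: a bihomogeneous prime ideal of the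
bihomogeneous coordinate ring of `ℙⁿ × ℙ³`, containing the defining polynomial `P`, not
containing either irrelevant ideal, and of height one over `(P)`. -/
structure IsPrimeDivisor (p : Ideal (MvPolynomial (Fin (n + 1) ⊕ Fin 4) K)) : Prop where
  prime : p.IsPrime
  bihom : ∀ f ∈ p, ∀ d : ℕ × ℕ, weightedHomogeneousComponent (biWeight n) d f ∈ p
  relevant_x : ∃ j : Fin (n + 1), X (Sum.inl j) ∉ p
  relevant_y : ∃ i : Fin 4, X (Sum.inr i) ∉ p
  mem : cubicBundlePolyK n c K ∈ p
  exists_lt : ∃ q : Ideal (MvPolynomial (Fin (n + 1) ⊕ Fin 4) K),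
    q.IsPrime ∧ cubicBundlePolyK n c K ∈ q ∧ q < p
  height_one : ∀ q : Ideal (MvPolynomial (Fin (n + 1) ⊕ Fin 4) K),
    q.IsPrime → cubicBundlePolyK n c K ∈ q → q < p →
      ∀ r : Ideal (MvPolynomial (Fin (n + 1) ⊕ Fin 4) K),
        r.IsPrime → cubicBundlePolyK n c K ∈ r → r ≤ q → r = q

/-- The type of prime divisors of `X_{n+2}` over `K`. -/
def PrimeDivisor : Type :=
  {p : Ideal (MvPolynomial (Fin (n + 1) ⊕ Fin 4) K) // IsPrimeDivisor n c K p}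

/-- The order of vanishing along the prime divisor `p` of a form `f`: the largest `m`
with `f ∈ p⁽ᵐ⁾` (symbolic power) in the coordinate ring of `X_{n+2}`, i.e. such that
`s·f ∈ pᵐ + (P)` for some `s ∉ p`. -/
def ordAt (p : PrimeDivisor n c K) (f : MvPolynomial (Fin (n + 1) ⊕ Fin 4) K) : ℕ :=
  sSup {m : ℕ | ∃ s, s ∉ p.1 ∧ s * f ∈ p.1 ^ m ⊔ Ideal.span {cubicBundlePolyK n c K}}

/-- The subgroup of principal divisors: the subgroup of the divisor group
`⨁_p ℤ = PrimeDivisor →₀ ℤ` generated by the divisors `div(f/g) = (ord_p f - ord_p g)_p`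
of ratios of bihomogeneous forms of equal bidegree not vanishing identically on
`X_{n+2}`. -/
def principalDivisors : AddSubgroup (PrimeDivisor n c K →₀ ℤ) :=
  AddSubgroup.closure
    {D | ∃ (f g : MvPolynomial (Fin (n + 1) ⊕ Fin 4) K) (d : ℕ × ℕ),
      f.IsWeightedHomogeneous (biWeight n) d ∧ g.IsWeightedHomogeneous (biWeight n) d ∧
      f ∉ Ideal.span {cubicBundlePolyK n c K} ∧ g ∉ Ideal.span {cubicBundlePolyK n c K} ∧
      ∀ p : PrimeDivisor n c K, D p = (ordAt n c K p f : ℤ) - (ordAt n c K p g : ℤ)}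

/-- The divisor class group of `X_{n+2}` over `K`; since `X_{n+2}` is smooth, this is its
Picard group. -/
def PicX : Type :=
  (PrimeDivisor n c K →₀ ℤ) ⧸ principalDivisors n c K

instance : AddCommGroup (PicX n c K) :=
  QuotientAddGroup.Quotient.addCommGroup (principalDivisors n c K)

section WeightedHomogeneous

variable {σ R : Type*} [CommRing R]

/-- The substitution `X i ↦ t ^ w i * X i`, as a polynomial in the parameter `t`. -/
def weightScale (w : σ → ℕ) : MvPolynomial σ R →ₐ[R] Polynomial (MvPolynomial σ R) :=
  aeval fun i => Polynomial.C (X i) * Polynomial.X ^ w i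

theorem weightScale_X (w : σ → ℕ) (i : σ) :
    weightScale w (X i : MvPolynomial σ R) = Polynomial.C (X i) * Polynomial.X ^ w i :=
  aeval_X _ _

theorem weightScale_monomial (w : σ → ℕ) (m : σ →₀ ℕ) (r : R) :
    weightScale w (monomial m r) =
      Polynomial.C (monomial m r) * Polynomial.X ^ Finsupp.weight w m := by
  rw [weightScale, aeval_monomial, monomial_eq, Finsupp.weight_apply]
  simp only [Finsupp.prod, mul_pow, Finset.prod_mul_distrib, map_mul, map_prod, map_pow,
    Finsupp.sum, ← Finset.prod_pow_eq_pow_sum, smul_eq_mul, ← pow_mul, mul_comm (w _), mul_assoc]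
  rfl

theorem coeff_coeff_weightScale (w : σ → ℕ) (f : MvPolynomial σ R) (m : σ →₀ ℕ) (e : ℕ) :
    coeff m ((weightScale w f).coeff e) = if Finsupp.weight w m = e then coeff m f else 0 := by
  classical
  induction f using MvPolynomial.induction_on' with
  | monomial u r =>
    rw [weightScale_monomial, Polynomial.coeff_C_mul_X_pow]
    by_cases h : u = m
    · subst h; split_ifs <;> simp_all
    · split_ifs <;> simp [coeff_monomial, h]
  | add p q hp hq =>
    rw [map_add, Polynomial.coeff_add, coeff_add, hp, hq, coeff_add]
    split_ifs <;> simp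

theorem isWeightedHomogeneous_iff_weightScale (w : σ → ℕ) (f : MvPolynomial σ R) (d : ℕ) :
    f.IsWeightedHomogeneous w d ↔ weightScale w f = Polynomial.C f * Polynomial.X ^ d := by
  constructor
  · intro h
    ext e m
    rw [coeff_coeff_weightScale, Polynomial.coeff_C_mul_X_pow]
    by_cases hm : coeff m f = 0
    · split_ifs <;> simp [hm]
    · rw [h hm]
      by_cases hde : d = e
      · simp [hde]
      · simp [hde, Ne.symm hde]
  · intro h m hm
    by_contra hne
    have := coeff_coeff_weightScale w f m d
    rw [h, Polynomial.coeff_C_mul_X_pow] at this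
    simp_all

/-- A factor of a nonzero weighted homogeneous polynomial is weighted homogeneous. -/
theorem MvPolynomial.IsWeightedHomogeneous.exists_of_mul [IsDomain R] {w : σ → ℕ}
    {f g : MvPolynomial σ R} {d : ℕ} (h : (f * g).IsWeightedHomogeneous w d) (hfg : f * g ≠ 0) :
    ∃ e, f.IsWeightedHomogeneous w e := by
  rw [isWeightedHomogeneous_iff_weightScale, map_mul] at h
  have eval_one : ∀ p : MvPolynomial σ R, (weightScale w p).eval 1 = p := fun p => by
    have : (Polynomial.evalRingHom (1 : MvPolynomial σ R)).comp
        (weightScale w : _ →ₐ[R] _).toRingHom = RingHom.id _ := by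
      ext i <;> simp [weightScale]
    exact congrArg (fun φ : _ →+* _ => φ p) this
  have hf : weightScale w f ≠ 0 := fun h0 => hfg (by
    rw [← eval_one f, h0]; simp)
  have hg : weightScale w g ≠ 0 := fun h0 => hfg (by
    rw [← eval_one g, h0]; simp)
  have h1 := congrArg Polynomial.natDegree h
  have h2 := congrArg Polynomial.natTrailingDegree h
  rw [Polynomial.natDegree_mul hf hg, Polynomial.natDegree_C_mul_X_pow _ _ hfg] at h1
  rw [Polynomial.natTrailingDegree_mul hf hg, Polynomial.C_mul_X_pow_eq_monomial,
    Polynomial.natTrailingDegree_monomial hfg] at h2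
  have h3 := Polynomial.natTrailingDegree_le_natDegree (weightScale w f)
  have h4 := Polynomial.natTrailingDegree_le_natDegree (weightScale w g)
  refine ⟨(weightScale w f).natDegree, ?_⟩
  rw [isWeightedHomogeneous_iff_weightScale]
  have key : weightScale w f = Polynomial.C ((weightScale w f).coeff (weightScale w f).natDegree)
      * Polynomial.X ^ (weightScale w f).natDegree := by
    ext1 e
    rw [Polynomial.coeff_C_mul_X_pow]
    split_ifs with he
    · rw [he]
    · rcases lt_or_gt_of_ne he with hlt | hlt
      · exact Polynomial.coeff_eq_zero_of_lt_natTrailingDegree (by omega)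
      · exact Polynomial.coeff_eq_zero_of_natDegree_lt hlt
  have hc := eval_one f
  rw [key] at hc
  simp only [Polynomial.eval_mul, Polynomial.eval_C, Polynomial.eval_pow, Polynomial.eval_X,
    one_pow, mul_one] at hc
  rwa [hc] at key

theorem MvPolynomial.IsWeightedHomogeneous.map_weight {M N : Type*} [AddCommMonoid M]
    [AddCommMonoid N] {w : σ → M} {f : MvPolynomial σ R} {d : M}
    (h : f.IsWeightedHomogeneous w d) (g : M →+ N) :
    f.IsWeightedHomogeneous (fun i => g (w i)) (g d) := by
  intro m hm
  rw [← h hm, Finsupp.weight_apply, Finsupp.weight_apply, map_finsuppSum]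
  simp

end WeightedHomogeneous

section WeightedHomogeneousMaps

variable {σ τ R M N : Type*} [CommRing R] [AddCommMonoid M] [AddCommMonoid N]

theorem weightedHomogeneousComponent_mem_span {w : σ → M} {s : Set (MvPolynomial σ R)}
    (hs : ∀ f ∈ s, ∃ d, f.IsWeightedHomogeneous w d) {f : MvPolynomial σ R}
    (hf : f ∈ Ideal.span s) (d : M) : weightedHomogeneousComponent w d f ∈ Ideal.span s := by
  classical
  let := weightedGradedAlgebra R w
  exact weightedHomogeneousComponent_mem_of_mem R w (Ideal.homogeneous_span _ s hs) hf d

/-- A property closed under sums that holds for all homogeneous components of `f`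
holds for `f`. -/
theorem weightedHomogeneousComponent_induction (w : σ → M) {motive : MvPolynomial σ R → Prop}
    (f : MvPolynomial σ R) (zero : motive 0) (add : ∀ a b, motive a → motive b → motive (a + b))
    (comp : ∀ d, motive (weightedHomogeneousComponent w d f)) : motive f := by
  classical
  rw [← sum_weightedHomogeneousComponent w f,
    finsum_eq_sum _ (weightedHomogeneousComponent_finsupp f)]
  exact Finset.sum_induction _ motive add zero fun d _ => comp d

theorem exists_weightedHomogeneousComponent_notMem (w : σ → M) {I : Ideal (MvPolynomial σ R)}
    {f : MvPolynomial σ R} (hf : f ∉ I) : ∃ d, weightedHomogeneousComponent w d f ∉ I := by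
  by_contra! h
  exact hf (weightedHomogeneousComponent_induction w f I.zero_mem (fun _ _ => I.add_mem) h)

theorem MvPolynomial.IsWeightedHomogeneous.map_algHom {w : σ → M} {w' : τ → N} (g : M →+ N)
    (φ : MvPolynomial σ R →ₐ[R] MvPolynomial τ R)
    (hφ : ∀ i, (φ (X i)).IsWeightedHomogeneous w' (g (w i)))
    {f : MvPolynomial σ R} {d : M} (hf : f.IsWeightedHomogeneous w d) :
    (φ f).IsWeightedHomogeneous w' (g d) := by
  induction hf using IsWeightedHomogeneous.induction_on with
  | zero => simpa using isWeightedHomogeneous_zero R w' _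
  | add p q _ _ hp hq => rw [map_add]; exact hp.add hq
  | monomial m r hm =>
    rw [monomial_eq, map_mul, ← algebraMap_eq, AlgHom.commutes, algebraMap_eq, Finsupp.prod,
      map_prod, ← hm, Finsupp.weight_apply, map_finsuppSum, Finsupp.sum]
    refine .C_mul (IsWeightedHomogeneous.prod _ _ _ fun i _ => ?_) r
    rw [map_pow, map_nsmul]
    exact (hφ i).pow _

theorem weightedHomogeneousComponent_map_algHom {w : σ → M} {w' : τ → N} (g : M →+ N)
    (hg : Function.Injective g) (φ : MvPolynomial σ R →ₐ[R] MvPolynomial τ R)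
    (hφ : ∀ i, (φ (X i)).IsWeightedHomogeneous w' (g (w i))) (f : MvPolynomial σ R) (d : M) :
    weightedHomogeneousComponent w' (g d) (φ f) = φ (weightedHomogeneousComponent w d f) := by
  refine weightedHomogeneousComponent_induction w
    (motive := fun f => weightedHomogeneousComponent w' (g d) (φ f) =
      φ (weightedHomogeneousComponent w d f)) f (by simp)
    (fun a b ha hb => by simp [ha, hb]) fun e => ?_
  have he := weightedHomogeneousComponent_isWeightedHomogeneous (w := w) e f
  have he' := he.map_algHom g φ hφ
  by_cases hde : d = e
  · subst hde
    rw [weightedHomogeneousComponent_eq_self he, weightedHomogeneousComponent_eq_self he']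
  · rw [he.weightedHomogeneousComponent_ne d hde,
      he'.weightedHomogeneousComponent_ne _ (hg.ne hde), map_zero]

end WeightedHomogeneousMaps

section Bihomogeneous

variable {n : ℕ} {R : Type*} [CommRing R]

theorem isWeightedHomogeneous_biWeight_iff {f : MvPolynomial (Fin (n + 1) ⊕ Fin 4) R}
    {d : ℕ × ℕ} : f.IsWeightedHomogeneous (biWeight n) d ↔
      f.IsWeightedHomogeneous (fun i => (biWeight n i).1) d.1 ∧
      f.IsWeightedHomogeneous (fun i => (biWeight n i).2) d.2 := by
  refine ⟨fun h => ⟨h.map_weight (AddMonoidHom.fst ℕ ℕ), h.map_weight (AddMonoidHom.snd ℕ ℕ)⟩,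
    fun h m hm => ?_⟩
  have h1 := h.1 hm
  have h2 := h.2 hm
  rw [Finsupp.weight_apply] at h1 h2 ⊢
  refine Prod.ext ?_ ?_
  · rw [← h1, ← AddMonoidHom.coe_fst, map_finsuppSum]; rfl
  · rw [← h2, ← AddMonoidHom.coe_snd, map_finsuppSum]; rfl

theorem exists_isWeightedHomogeneous_biWeight_of_mul [IsDomain R]
    {f g : MvPolynomial (Fin (n + 1) ⊕ Fin 4) R} {d : ℕ × ℕ}
    (h : (f * g).IsWeightedHomogeneous (biWeight n) d) (hfg : f * g ≠ 0) :
    ∃ e, f.IsWeightedHomogeneous (biWeight n) e := by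
  rw [isWeightedHomogeneous_biWeight_iff] at h
  obtain ⟨a, ha⟩ := h.1.exists_of_mul hfg
  obtain ⟨b, hb⟩ := h.2.exists_of_mul hfg
  exact ⟨(a, b), isWeightedHomogeneous_biWeight_iff.2 ⟨ha, hb⟩⟩

end Bihomogeneous

section CubicExtensions

theorem Polynomial.Monic.prime_of_irreducible_map {A L : Type*} [CommRing A] [Field L]
    (i : A →+* L) (hi : Function.Injective i) {g : Polynomial A} (hg : g.Monic)
    (h : Irreducible (g.map i)) : Prime g := by
  have hp := h.prime
  refine ⟨?_, fun hu => h.not_isUnit (hu.map (Polynomial.mapRingHom i)), fun a b hab => ?_⟩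
  · rintro rfl
    simp at h
  · rw [← Polynomial.map_dvd_map i hi hg, Polynomial.map_mul] at hab
    rw [← Polynomial.map_dvd_map i hi hg, ← Polynomial.map_dvd_map i hi hg]
    exact hp.dvd_or_dvd hab

theorem mul_pow_ne_cube {R : Type*} [CommRing R] [IsDomain R] [UniqueFactorizationMonoid R]
    {v w : R} (hv : Squarefree v) (hv0 : v ≠ 0) (hu : ¬IsUnit v) (hvw : IsCoprime v w) (j : ℕ)
    (g : R) : g ^ 3 ≠ v * w ^ j := by
  intro h
  obtain ⟨q, hq, hqv⟩ := WfDvdMonoid.exists_irreducible_factor hu hv0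
  have hqg : q ∣ g := hq.prime.dvd_of_dvd_pow (h ▸ hqv.mul_right _)
  have h3 : q ^ 3 ∣ v * w ^ j := h ▸ pow_dvd_pow_of_dvd hqg 3
  have hcop : IsCoprime (q ^ 3) (w ^ j) := (hvw.of_isCoprime_of_dvd_left hqv).pow
  refine hq.not_isUnit (hv q ((Dvd.intro q ?_).trans (hcop.dvd_of_dvd_mul_right h3)))
  ring

/-- An element of the base field that becomes a cube after adjoining a cube root of `w` is, up to
cubes, a power of `w`. -/
theorem exists_cube_of_cube_adjoinRoot {k : Type*} [Field k] [CharZero k] {w v : k}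
    (hw : ∀ b : k, b ^ 3 ≠ w) {g : Polynomial k} (hg : g = Polynomial.X ^ 3 - Polynomial.C w)
    (β : AdjoinRoot g) (hβ : β ^ 3 = AdjoinRoot.of g v) : ∃ b : k, ∃ j < 3, v = w ^ j * b ^ 3 := by
  have hmon : g.Monic := hg ▸ Polynomial.monic_X_pow_sub_C w (by norm_num)
  have hdeg : g.natDegree = 3 := hg ▸ Polynomial.natDegree_X_pow_sub_C
  set α := AdjoinRoot.root g with hα
  have hα3 : α ^ 3 = AdjoinRoot.of g w := by
    have := AdjoinRoot.eval₂_root g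
    rwa [congrArg (Polynomial.eval₂ _ _) hg, Polynomial.eval₂_sub, Polynomial.eval₂_X_pow,
      Polynomial.eval₂_C, sub_eq_zero] at this
  obtain ⟨p, rfl⟩ := AdjoinRoot.mk_surjective β
  obtain ⟨a, b, e, habe⟩ : ∃ a b e : k, AdjoinRoot.mk g p =
      AdjoinRoot.of g a + AdjoinRoot.of g b * α + AdjoinRoot.of g e * α ^ 2 := by
    refine ⟨(p %ₘ g).coeff 0, (p %ₘ g).coeff 1, (p %ₘ g).coeff 2, ?_⟩
    have h1 : AdjoinRoot.mk g p = AdjoinRoot.mk g (p %ₘ g) := by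
      conv_lhs => rw [← Polynomial.modByMonic_add_div p g]
      simp
    have h2 : (p %ₘ g).natDegree < 3 := by
      have := Polynomial.natDegree_modByMonic_lt p hmon (by rintro h; simp [h] at hdeg)
      omega
    rw [h1, Polynomial.as_sum_range' (p %ₘ g) 3 h2]
    simp [Finset.sum_range_succ, ← Polynomial.C_mul_X_pow_eq_monomial, hα]
  have hlin : ∀ a b e : k, AdjoinRoot.of g a + AdjoinRoot.of g b * α + AdjoinRoot.of g e * α ^ 2
      = 0 → a = 0 ∧ b = 0 ∧ e = 0 := by
    intro a b e h
    have h' : AdjoinRoot.mk g (Polynomial.C a + Polynomial.C b * Polynomial.X +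
        Polynomial.C e * Polynomial.X ^ 2) = 0 := by
      rw [← h]; simp [hα]
    rw [AdjoinRoot.mk_eq_zero] at h'
    have h0 := Polynomial.eq_zero_of_dvd_of_degree_lt h' (by
      rw [Polynomial.degree_eq_natDegree hmon.ne_zero, hdeg]
      compute_degree!)
    have c0 := congrArg (fun q => Polynomial.coeff q 0) h0
    have c1 := congrArg (fun q => Polynomial.coeff q 1) h0
    have c2 := congrArg (fun q => Polynomial.coeff q 2) h0
    simp [Polynomial.coeff_X, Polynomial.coeff_C] at c0 c1 c2
    exact ⟨c0, c1, c2⟩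
  rw [habe] at hβ
  obtain ⟨h0, h1, h2⟩ := hlin (a ^ 3 + w * b ^ 3 + w ^ 2 * e ^ 3 + 6 * w * a * b * e - v)
    (3 * (a ^ 2 * b + w * (a * e ^ 2 + b ^ 2 * e)))
    (3 * (a ^ 2 * e + a * b ^ 2 + w * b * e ^ 2)) (by
      simp only [map_add, map_mul, map_sub, map_pow, ← hα3, ← hβ, map_ofNat]
      ring)
  have h1' : a ^ 2 * b + w * (a * e ^ 2 + b ^ 2 * e) = 0 := by simpa using h1
  have h2' : a ^ 2 * e + a * b ^ 2 + w * b * e ^ 2 = 0 := by simpa using h2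
  have hw0 : w ≠ 0 := fun h => hw 0 (by simp [h])
  have key : a * (w * e ^ 3 - b ^ 3) = 0 := by linear_combination e * h1' - b * h2'
  rcases mul_eq_zero.1 key with ha | hbe
  · subst ha
    have : w * b * e ^ 2 = 0 := by linear_combination h2'
    rcases mul_eq_zero.1 this with h | h
    · rcases mul_eq_zero.1 h with h | h
      · exact absurd h hw0
      · subst h
        exact ⟨e, 2, by norm_num, by linear_combination -h0⟩
    · have he : e = 0 := by simpa using h
      subst he
      exact ⟨b, 1, by norm_num, by linear_combination -h0⟩
  · by_cases he : e = 0
    · subst he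
      have hb : b = 0 := by simpa using hbe
      subst hb
      exact ⟨a, 0, by norm_num, by linear_combination -h0⟩
    · exact absurd (show (b / e) ^ 3 = w by field_simp; linear_combination -hbe) (hw _)

/-- If `w` and `v` specialise to coprime squarefree non-units, then the two successive cubic
equations `z ^ 3 = w`, `z' ^ 3 = v` are prime. -/
theorem prime_cubic_tower {D R : Type*} [CommRing D] [IsDomain D] [IsIntegrallyClosed D]
    [CharZero D] [CommRing R] [IsDomain R] [UniqueFactorizationMonoid R] (ev : D →+* R) {w v : D}
    (hw : Squarefree (ev w)) (hw0 : ev w ≠ 0) (hwu : ¬IsUnit (ev w))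
    (hv : Squarefree (ev v)) (hv0 : ev v ≠ 0) (hvu : ¬IsUnit (ev v))
    (hvw : IsCoprime (ev v) (ev w)) :
    Prime (Polynomial.X ^ 3 - Polynomial.C w : Polynomial D) ∧
      Prime (Polynomial.X ^ 3 - Polynomial.C
        (AdjoinRoot.of (Polynomial.X ^ 3 - Polynomial.C w : Polynomial D) v)) := by
  let k := FractionRing D
  have : CharZero k := charZero_of_injective_algebraMap (IsFractionRing.injective D k)
  have cube : ∀ (x : D) (b : k), b ^ 3 = algebraMap D k x → ∃ y : D, y ^ 3 = x := by
    intro x b hb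
    obtain ⟨y, rfl⟩ := IsIntegrallyClosed.exists_algebraMap_eq_of_isIntegral_pow (R := D) (x := b)
      (n := 3) (by norm_num) (hb ▸ isIntegral_algebraMap)
    exact ⟨y, IsFractionRing.injective D k (by rw [map_pow, hb])⟩
  have hwk : ∀ b : k, b ^ 3 ≠ algebraMap D k w := by
    intro b hb
    obtain ⟨y, hy⟩ := cube w b hb
    exact mul_pow_ne_cube hw hw0 hwu isCoprime_one_right 0 (ev y) (by rw [← map_pow, hy]; simp)
  have hirr : Irreducible (Polynomial.X ^ 3 - Polynomial.C (algebraMap D k w)) :=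
    X_pow_sub_C_irreducible_of_prime Nat.prime_three hwk
  set g : Polynomial D := Polynomial.X ^ 3 - Polynomial.C w with hg
  have hgm : g.Monic := Polynomial.monic_X_pow_sub_C w (by norm_num)
  have hgmap : g.map (algebraMap D k) = Polynomial.X ^ 3 - Polynomial.C (algebraMap D k w) := by
    simp [hg]
  refine ⟨hgm.prime_of_irreducible_map (algebraMap D k) (IsFractionRing.injective D k)
    (hgmap ▸ hirr), ?_⟩
  set G : Polynomial k := Polynomial.X ^ 3 - Polynomial.C (algebraMap D k w) with hG
  have : Fact (Irreducible G) := ⟨hirr⟩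
  let i : AdjoinRoot g →+* AdjoinRoot G :=
    AdjoinRoot.lift ((AdjoinRoot.of G).comp (algebraMap D k)) (AdjoinRoot.root G) (by
      rw [← Polynomial.eval₂_map, hgmap, AdjoinRoot.eval₂_root])
  have hi_of : ∀ x, i (AdjoinRoot.of g x) = AdjoinRoot.of G (algebraMap D k x) :=
    fun x => AdjoinRoot.lift_of _
  have hi_mk : ∀ p, i (AdjoinRoot.mk g p) = AdjoinRoot.mk G (p.map (algebraMap D k)) := by
    intro p
    rw [AdjoinRoot.lift_mk, ← Polynomial.eval₂_map, ← AdjoinRoot.aeval_eq, Polynomial.aeval_def]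
    rfl
  have hi : Function.Injective i := by
    rw [injective_iff_map_eq_zero]
    intro a ha
    obtain ⟨p, rfl⟩ := AdjoinRoot.mk_surjective a
    rw [hi_mk, AdjoinRoot.mk_eq_zero, ← hgmap,
      Polynomial.map_dvd_map _ (IsFractionRing.injective D k) hgm] at ha
    rwa [AdjoinRoot.mk_eq_zero]
  refine (Polynomial.monic_X_pow_sub_C _ (by norm_num)).prime_of_irreducible_map i hi ?_
  rw [Polynomial.map_sub, Polynomial.map_pow, Polynomial.map_X, Polynomial.map_C]
  refine X_pow_sub_C_irreducible_of_prime Nat.prime_three fun β hβ => ?_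
  rw [hi_of] at hβ
  obtain ⟨b, j, hj, hb⟩ := exists_cube_of_cube_adjoinRoot hwk hG β hβ
  obtain ⟨y, hy⟩ := cube (v * w ^ (3 - j)) (b * algebraMap D k w) (by
    rw [map_mul, hb, map_pow, mul_pow,
      show algebraMap D k w ^ 3 = algebraMap D k w ^ j * algebraMap D k w ^ (3 - j) by
        rw [← pow_add]; congr 1; omega]
    ring)
  exact mul_pow_ne_cube hv hv0 hvu hvw (3 - j) (ev y) (by
    rw [← map_pow, hy, map_mul, map_pow])

end CubicExtensions

section FibreCubics

/-- The diagonal cubic form `∑ᵢ cᵢⱼ yᵢ³`, the coefficient of `x_j` in `P`. -/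
def fibreCubic (j : Fin (n + 1)) : MvPolynomial (Fin (n + 1) ⊕ Fin 4) K :=
  ∑ i : Fin 4, C (algebraMap ℚ K (c i j)) * X (Sum.inr i) ^ 3

theorem cubicBundlePolyK_eq_sum :
    cubicBundlePolyK n c K = ∑ j, X (Sum.inl j) * fibreCubic n c K j := by
  simp only [cubicBundlePolyK, fibreCubic, Finset.sum_mul, Finset.mul_sum]
  rw [Finset.sum_comm]
  exact Finset.sum_congr rfl fun j _ => Finset.sum_congr rfl fun i _ => by ring

theorem isWeightedHomogeneous_X_inl (R : Type*) [CommSemiring R] (j : Fin (n + 1)) :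
    (X (Sum.inl j) : MvPolynomial (Fin (n + 1) ⊕ Fin 4) R).IsWeightedHomogeneous
      (biWeight n) (1, 0) :=
  isWeightedHomogeneous_X R (biWeight n) (Sum.inl j)

theorem isWeightedHomogeneous_X_inr (R : Type*) [CommSemiring R] (i : Fin 4) :
    (X (Sum.inr i) : MvPolynomial (Fin (n + 1) ⊕ Fin 4) R).IsWeightedHomogeneous
      (biWeight n) (0, 1) :=
  isWeightedHomogeneous_X R (biWeight n) (Sum.inr i)

theorem isWeightedHomogeneous_fibreCubic (j : Fin (n + 1)) :
    (fibreCubic n c K j).IsWeightedHomogeneous (biWeight n) (0, 3) :=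
  IsWeightedHomogeneous.sum _ _ _ fun i _ =>
    .C_mul ((isWeightedHomogeneous_X_inr n K i).pow 3) _

theorem isWeightedHomogeneous_cubicBundlePolyK :
    (cubicBundlePolyK n c K).IsWeightedHomogeneous (biWeight n) (1, 3) := by
  rw [cubicBundlePolyK_eq_sum]
  exact IsWeightedHomogeneous.sum _ _ _ fun j _ =>
    (isWeightedHomogeneous_X_inl n K j).mul (isWeightedHomogeneous_fibreCubic n c K j)

variable {n} in
/-- Coordinates on `ℙⁿ` in which the pencil spanned by the cubics number `j₀` and `j₁` is in
reduced row echelon form with all remaining minors nonzero, and in which a third cubic, if there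
is one, is independent of the pencil. -/
structure IsAdapted (j₀ j₁ : Fin (n + 1)) : Prop where
  ne : j₁ ≠ j₀
  c00 : c 0 j₀ = 1
  c10 : c 1 j₀ = 0
  c01 : c 0 j₁ = 0
  c11 : c 1 j₁ = 1
  c20 : c 2 j₀ ≠ 0
  c30 : c 3 j₀ ≠ 0
  c21 : c 2 j₁ ≠ 0
  c31 : c 3 j₁ ≠ 0
  det : c 2 j₀ * c 3 j₁ - c 3 j₀ * c 2 j₁ ≠ 0
  third : (∀ j, j = j₀ ∨ j = j₁) ∨
    ∃ j₂, j₂ ≠ j₀ ∧ j₂ ≠ j₁ ∧ c 0 j₂ = 0 ∧ c 1 j₂ = 0 ∧ c 2 j₂ ≠ 0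

theorem squarefree_C_add_C_mul_X_pow_three {F : Type*} [Field F] [CharZero F] {a b : F}
    (ha : a ≠ 0) : Squarefree (Polynomial.C a + Polynomial.C b * Polynomial.X ^ 3) := by
  refine Polynomial.Separable.squarefree
    ⟨Polynomial.C a⁻¹, -(Polynomial.C (a⁻¹ * 3⁻¹) * Polynomial.X), ?_⟩
  have h1 : Polynomial.C a⁻¹ * Polynomial.C a = 1 := by
    rw [← Polynomial.C_mul, inv_mul_cancel₀ ha, Polynomial.C_1]
  have h3 : (Polynomial.C (3⁻¹ : F)) * 3 = 1 := by
    rw [← map_ofNat Polynomial.C 3, ← Polynomial.C_mul, inv_mul_cancel₀ (by norm_num),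
      Polynomial.C_1]
  simp only [Polynomial.derivative_add, Polynomial.derivative_C, Polynomial.derivative_C_mul_X_pow,
    Polynomial.C_mul, Nat.cast_ofNat, map_ofNat]
  linear_combination h1 - Polynomial.C a⁻¹ * Polynomial.C b * Polynomial.X ^ 3 * h3

theorem natDegree_C_add_C_mul_X_pow_three {F : Type*} [Field F] {a b : F} (hb : b ≠ 0) :
    (Polynomial.C a + Polynomial.C b * Polynomial.X ^ 3).natDegree = 3 := by
  compute_degree!

theorem isCoprime_C_add_C_mul_X_pow_three {F : Type*} [Field F] {a b a' b' : F}
    (h : a * b' - b * a' ≠ 0) :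
    IsCoprime (Polynomial.C a + Polynomial.C b * Polynomial.X ^ 3)
      (Polynomial.C a' + Polynomial.C b' * Polynomial.X ^ 3) := by
  refine ⟨Polynomial.C ((a * b' - b * a')⁻¹ * b'), -Polynomial.C ((a * b' - b * a')⁻¹ * b), ?_⟩
  have h1 : Polynomial.C (a * b' - b * a')⁻¹ * Polynomial.C (a * b' - b * a') = 1 := by
    rw [← Polynomial.C_mul, inv_mul_cancel₀ h, Polynomial.C_1]
  simp only [Polynomial.C_mul, Polynomial.C_sub] at h1 ⊢
  linear_combination h1

variable {c} {j₀ j₁ : Fin (n + 1)}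

theorem IsAdapted.prime_fibreCubic_pencil (h : IsAdapted c j₀ j₁) :
    Prime (fibreCubic n c K j₀) ∧
      (Ideal.span {fibreCubic n c K j₀, fibreCubic n c K j₁}).IsPrime := by
  let q : ℚ → K := algebraMap ℚ K
  have hq : ∀ {x : ℚ}, x ≠ 0 → q x ≠ 0 := fun hx => by simpa [q] using hx
  let w : MvPolynomial (Fin (n + 1) ⊕ Fin 4) K :=
    -(C (q (c 2 j₀)) * X (Sum.inr 2) ^ 3 + C (q (c 3 j₀)) * X (Sum.inr 3) ^ 3)
  let v : MvPolynomial (Fin (n + 1) ⊕ Fin 4) K :=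
    -(C (q (c 2 j₁)) * X (Sum.inr 2) ^ 3 + C (q (c 3 j₁)) * X (Sum.inr 3) ^ 3)
  have hF0 : fibreCubic n c K j₀ = X (Sum.inr 0) ^ 3 - w := by
    simp [fibreCubic, Fin.sum_univ_four, h.c00, h.c10, w, q]; ring
  have hF1 : fibreCubic n c K j₁ = X (Sum.inr 1) ^ 3 - v := by
    simp [fibreCubic, Fin.sum_univ_four, h.c01, h.c11, v, q]; ring
  let ev : MvPolynomial (Fin (n + 1) ⊕ Fin 4) K →+* Polynomial K :=
    (aeval (Sum.elim (fun _ => 0) ![0, 0, 1, Polynomial.X]) :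
      MvPolynomial (Fin (n + 1) ⊕ Fin 4) K →ₐ[K] Polynomial K).toRingHom
  have evw : ev w = Polynomial.C (-q (c 2 j₀)) + Polynomial.C (-q (c 3 j₀)) * Polynomial.X ^ 3 := by
    simp [ev, w, Polynomial.algebraMap_eq]; ring
  have evv : ev v = Polynomial.C (-q (c 2 j₁)) + Polynomial.C (-q (c 3 j₁)) * Polynomial.X ^ 3 := by
    simp [ev, v, Polynomial.algebraMap_eq]; ring
  have nonunit : ∀ {p : Polynomial K}, p.natDegree = 3 → p ≠ 0 ∧ ¬IsUnit p := fun hp =>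
    ⟨by rintro rfl; simp at hp, fun hu => by simp [Polynomial.natDegree_eq_zero_of_isUnit hu] at hp⟩
  have hwd := nonunit (evw ▸ natDegree_C_add_C_mul_X_pow_three (neg_ne_zero.2 (hq h.c30)))
  have hvd := nonunit (evv ▸ natDegree_C_add_C_mul_X_pow_three (neg_ne_zero.2 (hq h.c31)))
  obtain ⟨p1, p2⟩ := prime_cubic_tower ev (w := w) (v := v)
    (evw ▸ squarefree_C_add_C_mul_X_pow_three (neg_ne_zero.2 (hq h.c20))) hwd.1 hwd.2
    (evv ▸ squarefree_C_add_C_mul_X_pow_three (neg_ne_zero.2 (hq h.c21))) hvd.1 hvd.2 (by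
      rw [evv, evw]
      refine isCoprime_C_add_C_mul_X_pow_three fun h0 => hq h.det ?_
      simp only [q, map_sub, map_mul] at h0 ⊢
      linear_combination -h0)
  set g : Polynomial (MvPolynomial (Fin (n + 1) ⊕ Fin 4) K) :=
    Polynomial.X ^ 3 - Polynomial.C w with hg
  have : IsDomain (AdjoinRoot g) := AdjoinRoot.isDomain_of_prime p1
  have hroot : AdjoinRoot.root g ^ 3 = AdjoinRoot.of g w := by
    have := AdjoinRoot.eval₂_root g
    rwa [congrArg (Polynomial.eval₂ _ _) hg, Polynomial.eval₂_sub, Polynomial.eval₂_X_pow,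
      Polynomial.eval₂_C, sub_eq_zero] at this
  let φ : MvPolynomial (Fin (n + 1) ⊕ Fin 4) K →ₐ[K] Polynomial (AdjoinRoot g) := aeval (Sum.elim
    (fun j => Polynomial.C (AdjoinRoot.of g (X (Sum.inl j))))
    ![Polynomial.C (AdjoinRoot.root g), Polynomial.X,
      Polynomial.C (AdjoinRoot.of g (X (Sum.inr 2))),
      Polynomial.C (AdjoinRoot.of g (X (Sum.inr 3)))])
  have hφC : ∀ a : K, φ (C a) = Polynomial.C (AdjoinRoot.of g (C a)) := fun a => by
    rw [← MvPolynomial.algebraMap_eq, AlgHom.commutes]; rfl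
  have hφw : φ w = Polynomial.C (AdjoinRoot.of g w) := by
    simp only [w, map_neg, map_add, map_mul, map_pow, hφC]
    simp [φ]
  have hφv : φ v = Polynomial.C (AdjoinRoot.of g v) := by
    simp only [v, map_neg, map_add, map_mul, map_pow, hφC]
    simp [φ]
  have hφ0 : φ (fibreCubic n c K j₀) = 0 := by
    rw [hF0, map_sub, map_pow, hφw, ← hroot]
    simp [φ]
  have hφ1 : φ (fibreCubic n c K j₁) = Polynomial.X ^ 3 - Polynomial.C (AdjoinRoot.of g v) := by
    rw [hF1, map_sub, map_pow, hφv]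
    simp [φ]
  /- A left inverse of `φ` modulo any ideal containing the first cubic. -/
  have left_inv : ∀ I : Ideal (MvPolynomial (Fin (n + 1) ⊕ Fin 4) K), fibreCubic n c K j₀ ∈ I →
      ∃ ρ : Polynomial (AdjoinRoot g) →+* (MvPolynomial (Fin (n + 1) ⊕ Fin 4) K) ⧸ I,
        ∀ f, ρ (φ f) = Ideal.Quotient.mk I f := by
    intro I hI
    let ρ₀ : (AdjoinRoot g) →+* (MvPolynomial (Fin (n + 1) ⊕ Fin 4) K) ⧸ I :=
      AdjoinRoot.lift (Ideal.Quotient.mk I) (Ideal.Quotient.mk I (X (Sum.inr 0))) (by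
        rw [congrArg (Polynomial.eval₂ _ _) hg, Polynomial.eval₂_sub, Polynomial.eval₂_X_pow,
          Polynomial.eval₂_C, ← map_pow, ← map_sub, ← hF0]
        exact Ideal.Quotient.eq_zero_iff_mem.2 hI)
    let ρ : Polynomial (AdjoinRoot g) →+* (MvPolynomial (Fin (n + 1) ⊕ Fin 4) K) ⧸ I :=
      Polynomial.eval₂RingHom ρ₀ (Ideal.Quotient.mk I (X (Sum.inr 1)))
    refine ⟨ρ, fun f => ?_⟩
    have : ρ.comp φ.toRingHom = Ideal.Quotient.mk I := by
      refine MvPolynomial.ringHom_ext (fun a => ?_) fun i => ?_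
      · change ρ (φ (C a)) = _
        rw [hφC]
        simp [ρ, ρ₀]
      · rcases i with j | i
        · simp [φ, ρ, ρ₀]
        · fin_cases i <;> simp [φ, ρ, ρ₀]
    exact RingHom.congr_fun this f
  constructor
  · have hF0ne : fibreCubic n c K j₀ ≠ 0 := fun h0 => by
      have := congrArg (aeval (Sum.elim (fun _ => 0) ![1, 0, 0, 0]) :
        MvPolynomial (Fin (n + 1) ⊕ Fin 4) K →ₐ[K] K) h0
      rw [hF0] at this
      simp [w] at this
    rw [← Ideal.span_singleton_prime hF0ne]
    have : Ideal.span {fibreCubic n c K j₀} = RingHom.ker φ.toRingHom := by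
      refine le_antisymm ?_ fun f hf => ?_
      · rw [Ideal.span_singleton_le_iff_mem]
        exact hφ0
      · obtain ⟨ρ, hρ⟩ := left_inv _ (Ideal.mem_span_singleton_self (fibreCubic n c K j₀))
        rw [← Ideal.Quotient.eq_zero_iff_mem, ← hρ, show φ f = 0 from hf, map_zero]
    rw [this]
    exact RingHom.ker_isPrime _
  · set r : Polynomial (AdjoinRoot g) := Polynomial.X ^ 3 - Polynomial.C (AdjoinRoot.of g v) with hr
    have hrp : (Ideal.span {r}).IsPrime := (Ideal.span_singleton_prime p2.ne_zero).2 p2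
    have : Ideal.span {fibreCubic n c K j₀, fibreCubic n c K j₁} =
        (Ideal.span {r}).comap φ.toRingHom := by
      refine le_antisymm ?_ fun f hf => ?_
      · rw [Ideal.span_le]
        rintro x (rfl | rfl)
        · exact (congrArg (· ∈ Ideal.span {r}) hφ0).mpr (Ideal.zero_mem _)
        · exact (congrArg (· ∈ Ideal.span {r}) hφ1).mpr (Ideal.mem_span_singleton_self r)
      · obtain ⟨ρ, hρ⟩ := left_inv (Ideal.span {fibreCubic n c K j₀, fibreCubic n c K j₁})
          (Ideal.subset_span (by simp))
        obtain ⟨b, hb⟩ := Ideal.mem_span_singleton'.1 (show φ f ∈ Ideal.span {r} from hf)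
        rw [← Ideal.Quotient.eq_zero_iff_mem, ← hρ, ← hb, ← hφ1, map_mul, hρ,
          Ideal.Quotient.eq_zero_iff_mem.2 (Ideal.subset_span (by simp)), mul_zero]
    rw [this]
    exact Ideal.IsPrime.comap _

end FibreCubics

section LocalGenerator

variable {A : Type*} [CommRing A]

/-- `π` generates the maximal ideal of the local ring of `A ⧸ (P)` at `p`, and is nonzero there. -/
structure IsLocalGenerator (P : A) (p : Ideal A) (π : A) : Prop where
  mem : π ∈ p
  notMem : π ∉ Ideal.span {P}
  exists_mul_mem : ∀ a ∈ p, ∃ s ∉ p, s * a ∈ Ideal.span {π} ⊔ Ideal.span {P}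

variable {P π : A} {p : Ideal A} [p.IsPrime]

theorem IsLocalGenerator.exists_mul_mem_pow (h : IsLocalGenerator P p π) (k : ℕ) :
    ∀ a ∈ p ^ k, ∃ s ∉ p, s * a ∈ Ideal.span {π ^ k} ⊔ Ideal.span {P} := by
  have hp1 : (1 : A) ∉ p := p.ne_top_iff_one.1 (Ideal.IsPrime.ne_top ‹_›)
  have hmul : ∀ {s t : A}, s ∉ p → t ∉ p → s * t ∉ p := fun hs ht hst =>
    (Ideal.IsPrime.mem_or_mem ‹_› hst).elim hs ht
  induction k with
  | zero => exact fun a _ => ⟨1, hp1, by simp⟩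
  | succ k ih =>
    intro a ha
    rw [pow_succ] at ha
    induction ha using Submodule.mul_induction_on' with
    | mem_mul_mem x hx y hy =>
      obtain ⟨s, hs, hsx⟩ := ih x hx
      obtain ⟨t, ht, hty⟩ := h.exists_mul_mem y hy
      refine ⟨s * t, hmul hs ht, ?_⟩
      obtain ⟨x1, hx1, x2, hx2, e1⟩ := Submodule.mem_sup.1 hsx
      obtain ⟨y1, hy1, y2, hy2, e2⟩ := Submodule.mem_sup.1 hty
      rw [show s * t * (x * y) = x1 * y1 + (x1 * y2 + x2 * (t * y)) by
        linear_combination (-(t * y)) * e1 - x1 * e2]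
      refine Submodule.add_mem_sup ?_ ?_
      · rw [pow_succ, ← Ideal.span_singleton_mul_span_singleton]
        exact Ideal.mul_mem_mul hx1 hy1
      · exact add_mem (Ideal.mul_mem_left _ _ hy2) (Ideal.mul_mem_right _ _ hx2)
    | add x _ y _ hx hy =>
      obtain ⟨s, hs, hsx⟩ := hx
      obtain ⟨t, ht, hty⟩ := hy
      refine ⟨s * t, hmul hs ht, ?_⟩
      rw [show s * t * (x + y) = t * (s * x) + s * (t * y) by ring]
      exact add_mem (Ideal.mul_mem_left _ _ hsx) (Ideal.mul_mem_left _ _ hty)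

/-- The order at `p` computed from a representation `f = (t / s) π ^ m` in the local ring. -/
theorem IsLocalGenerator.sSup_eq (h : IsLocalGenerator P p π) (hP : (Ideal.span {P}).IsPrime)
    (hPp : P ∈ p) {f s t : A} {m : ℕ} (hs : s ∉ p) (ht : t ∉ p)
    (hf : s * f - t * π ^ m ∈ Ideal.span {P}) :
    sSup {k : ℕ | ∃ s, s ∉ p ∧ s * f ∈ p ^ k ⊔ Ideal.span {P}} = m := by
  have hle : Ideal.span {P} ≤ p := (Ideal.span_singleton_le_iff_mem _).2 hPp
  refine IsGreatest.csSup_eq ⟨⟨s, hs, ?_⟩, ?_⟩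
  · rw [show s * f = t * π ^ m + (s * f - t * π ^ m) by ring]
    exact Submodule.add_mem_sup (Ideal.mul_mem_left _ _ (Ideal.pow_mem_pow h.mem m)) hf
  · rintro k ⟨s', hs', hk⟩
    by_contra! hlt
    obtain ⟨a, ha, b, hb, hab⟩ := Submodule.mem_sup.1 hk
    obtain ⟨u, hu, hua⟩ := h.exists_mul_mem_pow k a ha
    obtain ⟨y, hy, z, hz, hyz⟩ := Submodule.mem_sup.1 hua
    obtain ⟨r, rfl⟩ := Ideal.mem_span_singleton'.1 hy
    obtain ⟨e, rfl⟩ := Nat.exists_eq_add_of_lt hlt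
    have key : π ^ m * (u * s' * t - s * r * π ^ (e + 1)) ∈ Ideal.span {P} := by
      rw [show π ^ m * (u * s' * t - s * r * π ^ (e + 1)) =
        s * z + s * u * b - u * s' * (s * f - t * π ^ m) by
        rw [show m + e + 1 = m + (e + 1) by ring, pow_add] at hyz
        linear_combination (-s) * hyz - s * u * hab]
      exact sub_mem (add_mem (Ideal.mul_mem_left _ _ hz) (Ideal.mul_mem_left _ _ hb))
        (Ideal.mul_mem_left _ _ hf)
    have h1 := hle ((hP.mem_or_mem key).resolve_left fun hm => h.notMem (hP.mem_of_pow_mem _ hm))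
    have h2 : u * s' * t ∈ p := by
      rw [show u * s' * t = (u * s' * t - s * r * π ^ (e + 1)) + s * r * π ^ e * π by ring]
      exact add_mem h1 (Ideal.mul_mem_left _ _ h.mem)
    rcases Ideal.IsPrime.mem_or_mem ‹_› h2 with h3 | h3
    · exact (Ideal.IsPrime.mem_or_mem ‹_› h3).elim hu hs'
    · exact ht h3

theorem IsLocalGenerator.exists_eq_mul_pow [IsNoetherianRing A] (h : IsLocalGenerator P p π)
    (hP : (Ideal.span {P}).IsPrime) (hPp : P ∈ p) {f : A} (hf : f ∉ Ideal.span {P}) :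
    ∃ m : ℕ, ∃ s ∉ p, ∃ t ∉ p, s * f - t * π ^ m ∈ Ideal.span {P} := by
  have hle : Ideal.span {P} ≤ p := (Ideal.span_singleton_le_iff_mem _).2 hPp
  let mk := Ideal.Quotient.mk (Ideal.span {P})
  let pq := p.map mk
  have hmem : ∀ a, mk a ∈ pq ↔ a ∈ p := fun a => by
    rw [← Ideal.mem_comap, Ideal.comap_map_of_surjective' _ Ideal.Quotient.mk_surjective,
      Ideal.mk_ker, sup_eq_left.2 hle]
  have : pq.IsPrime := Ideal.map_isPrime_of_surjective Ideal.Quotient.mk_surjective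
    (by rwa [Ideal.mk_ker])
  let L := Localization.AtPrime pq
  let ψ : A →+* L := (algebraMap (A ⧸ Ideal.span {P}) L).comp mk
  have : IsDomain L := IsLocalization.isDomain_localization pq.primeCompl_le_nonZeroDivisors
  have : IsNoetherianRing L := IsLocalization.isNoetherianRing pq.primeCompl L inferInstance
  have hinj : Function.Injective (algebraMap (A ⧸ Ideal.span {P}) L) :=
    IsLocalization.injective L pq.primeCompl_le_nonZeroDivisors
  have hker : ∀ a, ψ a = 0 ↔ a ∈ Ideal.span {P} := fun a => by
    change algebraMap _ L (mk a) = 0 ↔ _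
    rw [map_eq_zero_iff _ hinj, Ideal.Quotient.eq_zero_iff_mem]
  have hunit : ∀ a, a ∉ p → IsUnit (ψ a) := fun a ha =>
    IsLocalization.map_units L (⟨mk a, fun h => ha ((hmem a).1 h)⟩ : pq.primeCompl)
  have hπ : ¬IsUnit (ψ π) := fun hu => by
    have := (IsLocalization.AtPrime.isUnit_to_map_iff L pq (mk π)).1 hu
    exact this ((hmem π).2 h.mem)
  obtain ⟨m, x, hx, e⟩ := WfDvdMonoid.max_power_factor' (a₀ := ψ f) (x := ψ π)
    (fun h0 => hf ((hker f).1 h0)) hπ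
  obtain ⟨y, z, rfl⟩ := IsLocalization.exists_mk'_eq pq.primeCompl x
  obtain ⟨t, rfl⟩ := Ideal.Quotient.mk_surjective y
  obtain ⟨z, hz⟩ := z
  obtain ⟨s, rfl⟩ := Ideal.Quotient.mk_surjective z
  have hs : s ∉ p := fun h => hz ((hmem s).2 h)
  have hst : ψ s * IsLocalization.mk' L (mk t) (⟨mk s, hz⟩ : pq.primeCompl) = ψ t :=
    IsLocalization.mk'_spec' L (mk t) (⟨mk s, hz⟩ : pq.primeCompl)
  refine ⟨m, s, hs, t, fun htp => hx ?_, ?_⟩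
  · obtain ⟨r, hr, hrt⟩ := h.exists_mul_mem t htp
    obtain ⟨a, ha, b, hb, hab⟩ := Submodule.mem_sup.1 hrt
    obtain ⟨a', rfl⟩ := Ideal.mem_span_singleton'.1 ha
    refine ((hunit r hr).dvd_mul_left).1 (((hunit s hs).dvd_mul_left).1 ⟨ψ a', ?_⟩)
    rw [mul_left_comm, hst, ← map_mul, ← hab, map_add, (hker b).2 hb, add_zero, map_mul, mul_comm]
  · rw [← hker, map_sub, map_mul, map_mul, map_pow, e, ← hst]
    ring

/-- A prime ideal with a local generator has height one over `(P)`. -/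
theorem IsLocalGenerator.eq_of_lt [IsNoetherianRing A] (h : IsLocalGenerator P p π)
    (hP : (Ideal.span {P}).IsPrime) (hPp : P ∈ p) {q : Ideal A} (hq : q.IsPrime) (hPq : P ∈ q)
    (hqp : q < p) : q = Ideal.span {P} := by
  have hle : Ideal.span {P} ≤ q := (Ideal.span_singleton_le_iff_mem _).2 hPq
  refine le_antisymm (fun f hf => ?_) hle
  have hπ : π ∉ q := fun hπ => hqp.not_ge fun a ha => by
    obtain ⟨s, hs, hsa⟩ := h.exists_mul_mem a ha
    refine (hq.mem_or_mem (sup_le ?_ hle hsa)).resolve_left fun hsq => hs (hqp.le hsq)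
    exact (Ideal.span_singleton_le_iff_mem _).2 hπ
  by_contra hfP
  obtain ⟨m, s, hs, t, ht, e⟩ := h.exists_eq_mul_pow hP hPp hfP
  have : t * π ^ m ∈ q := by
    rw [show t * π ^ m = s * f - (s * f - t * π ^ m) by ring]
    exact sub_mem (Ideal.mul_mem_left _ _ hf) (hle e)
  rcases hq.mem_or_mem this with h1 | h1
  · exact ht (hqp.le h1)
  · exact hπ (hq.mem_of_pow_mem _ h1)

end LocalGenerator

section Elimination

variable {n} {R : Type*} [CommRing R]

/-- The substitution `x_k ↦ G x_k` for `k ≠ j`, `x_j ↦ G x_j - Q`, `y_i ↦ y_i`. If `G` is the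
coefficient of `x_j` in the form `Q`, linear in `x`, it eliminates `x_j` from the equation
`Q = 0`. -/
def eliminate (j : Fin (n + 1)) (G Q : MvPolynomial (Fin (n + 1) ⊕ Fin 4) R) :
    MvPolynomial (Fin (n + 1) ⊕ Fin 4) R →ₐ[R] MvPolynomial (Fin (n + 1) ⊕ Fin 4) R :=
  aeval (Sum.elim (fun k => G * X (Sum.inl k) - if k = j then Q else 0) fun i => X (Sum.inr i))

variable (j : Fin (n + 1)) (G Q : MvPolynomial (Fin (n + 1) ⊕ Fin 4) R)

@[simp]
theorem eliminate_X_inl (k : Fin (n + 1)) : eliminate j G Q (X (Sum.inl k)) =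
    G * X (Sum.inl k) - if k = j then Q else 0 := by
  simp [eliminate]

@[simp]
theorem eliminate_X_inr (i : Fin 4) : eliminate j G Q (X (Sum.inr i)) = X (Sum.inr i) := by
  simp [eliminate]

/-- Multiplying the `x`-variables by `G`. -/
theorem eval_weightScale_biWeight {f : MvPolynomial (Fin (n + 1) ⊕ Fin 4) R} {d : ℕ × ℕ}
    (hf : f.IsWeightedHomogeneous (biWeight n) d) :
    (weightScale (fun i => (biWeight n i).1) f).eval G = G ^ d.1 * f := by
  rw [(isWeightedHomogeneous_iff_weightScale _ _ _).1 (isWeightedHomogeneous_biWeight_iff.1 hf).1]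
  rw [Polynomial.eval_C_mul, Polynomial.eval_pow, Polynomial.eval_X, mul_comm]

theorem eliminate_sub_mem {f : MvPolynomial (Fin (n + 1) ⊕ Fin 4) R} {d : ℕ × ℕ}
    (hf : f.IsWeightedHomogeneous (biWeight n) d) :
    eliminate j G Q f - G ^ d.1 * f ∈ Ideal.span {Q} := by
  rw [← eval_weightScale_biWeight G hf, ← Ideal.Quotient.eq]
  have : (Ideal.Quotient.mk (Ideal.span {Q})).comp (eliminate j G Q).toRingHom =
      (Ideal.Quotient.mk (Ideal.span {Q})).comp ((Polynomial.evalRingHom G).comp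
        (weightScale (fun i => (biWeight n i).1) :
          MvPolynomial (Fin (n + 1) ⊕ Fin 4) R →ₐ[R] _).toRingHom) := by
    have hQ : Ideal.Quotient.mk (Ideal.span {Q}) Q = 0 :=
      Ideal.Quotient.eq_zero_iff_mem.2 (Ideal.mem_span_singleton_self Q)
    refine MvPolynomial.ringHom_ext (fun r => ?_) fun i => ?_
    · simp [eliminate, weightScale]
    · rcases i with k | i
      · simp only [RingHom.comp_apply, AlgHom.toRingHom_eq_coe, RingHom.coe_coe, eliminate_X_inl,
          weightScale_X, map_sub, map_mul, apply_ite (Ideal.Quotient.mk (Ideal.span {Q})), hQ]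
        simp [biWeight, mul_comm]
      · simp [weightScale_X, biWeight]
  exact congrArg (fun φ : MvPolynomial (Fin (n + 1) ⊕ Fin 4) R →+* _ => φ f) this

theorem eliminate_eq_of_mem_supported {f : MvPolynomial (Fin (n + 1) ⊕ Fin 4) R} {d : ℕ × ℕ}
    (hf : f.IsWeightedHomogeneous (biWeight n) d) (hj : f ∈ supported R {Sum.inl j}ᶜ) :
    eliminate j G Q f = G ^ d.1 * f := by
  rw [← eval_weightScale_biWeight G hf]
  let Φ : MvPolynomial (Fin (n + 1) ⊕ Fin 4) R →ₐ[R] MvPolynomial (Fin (n + 1) ⊕ Fin 4) R :=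
    ((Polynomial.aeval G).restrictScalars R).comp (weightScale fun i => (biWeight n i).1)
  have : Set.EqOn (eliminate j G Q) Φ
      (supported R ({Sum.inl j}ᶜ : Set (Fin (n + 1) ⊕ Fin 4))) := by
    rw [supported_eq_adjoin_X]
    refine AlgHom.eqOn_adjoin_iff.2 ?_
    rintro _ ⟨k | i, hk, rfl⟩
    · have : k ≠ j := fun h => hk (by simp [h])
      simp [Φ, weightScale_X, biWeight, this, mul_comm (X (Sum.inl k)) G]
    · simp [Φ, weightScale_X, biWeight]
  simpa [Φ, Polynomial.aeval_def] using this hj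

/-- The effect of `eliminate` on bidegrees. -/
def eliminateDegree (e : ℕ) : ℕ × ℕ →+ ℕ × ℕ where
  toFun d := (d.1, d.2 + e * d.1)
  map_zero' := by simp
  map_add' a b := by ext <;> simp; ring

theorem eliminateDegree_injective (e : ℕ) : Function.Injective (eliminateDegree e) := by
  rintro ⟨a, b⟩ ⟨a', b'⟩ h
  simp only [eliminateDegree, AddMonoidHom.coe_mk, ZeroHom.coe_mk, Prod.mk.injEq] at h
  obtain ⟨rfl, h⟩ := h
  simpa using h

variable {G Q} {e : ℕ}

theorem isWeightedHomogeneous_eliminate_X (hG : G.IsWeightedHomogeneous (biWeight n) (0, e))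
    (hQ : Q.IsWeightedHomogeneous (biWeight n) (1, e)) (i : Fin (n + 1) ⊕ Fin 4) :
    (eliminate j G Q (X i)).IsWeightedHomogeneous (biWeight n)
      (eliminateDegree e (biWeight n i)) := by
  rcases i with k | i
  · have h1 := hG.mul (isWeightedHomogeneous_X_inl n R k)
    rw [eliminate_X_inl, sub_eq_add_neg, show eliminateDegree e (biWeight n (Sum.inl k)) = (1, e) by
      simp [eliminateDegree, biWeight]]
    refine IsWeightedHomogeneous.add (by simpa using h1) ?_
    split_ifs
    · simpa using hQ.C_mul (-1)
    · simpa using isWeightedHomogeneous_zero R _ _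
  · simpa [eliminateDegree, biWeight] using isWeightedHomogeneous_X_inr n R i

/-- An ideal in which `G` is not a zero divisor and on which `eliminate` is compatible with `J`
is the preimage of `J` under `eliminate`. -/
theorem comap_eliminate_eq (hG : G.IsWeightedHomogeneous (biWeight n) (0, e))
    (hQ : Q.IsWeightedHomogeneous (biWeight n) (1, e))
    {I J : Ideal (MvPolynomial (Fin (n + 1) ⊕ Fin 4) R)} (hQI : Q ∈ I) (hJI : J ≤ I)
    (hI : I ≤ J.comap (eliminate j G Q)) (hGI : ∀ f, G * f ∈ I → f ∈ I)
    (hJ : ∀ f ∈ J, ∀ d, weightedHomogeneousComponent (biWeight n) d f ∈ J) :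
    J.comap (eliminate j G Q) = I := by
  refine le_antisymm (fun f hf => ?_) hI
  have hpow : ∀ (m : ℕ) f, G ^ m * f ∈ I → f ∈ I := fun m => by
    induction m with
    | zero => simp
    | succ m ih => exact fun f hf => ih _ (hGI _ (by rwa [← mul_assoc, ← pow_succ']))
  refine weightedHomogeneousComponent_induction (biWeight n) f I.zero_mem
    (fun _ _ => I.add_mem) fun d => hpow d.1 _ ?_
  have h1 := eliminate_sub_mem j G Q
    (weightedHomogeneousComponent_isWeightedHomogeneous (w := biWeight n) d f)
  rw [← weightedHomogeneousComponent_map_algHom _ (eliminateDegree_injective e) _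
    (isWeightedHomogeneous_eliminate_X j hG hQ)] at h1
  have h2 := hJI (hJ _ hf (eliminateDegree e d))
  have h3 := I.sub_mem h2 ((Ideal.span_singleton_le_iff_mem I).2 hQI h1)
  rwa [sub_sub_cancel] at h3

theorem mem_supported_compl_singleton_iff {σ : Type*} {i : σ} {f : MvPolynomial σ R} :
    f ∈ supported R {i}ᶜ ↔ f.degreeOf i = 0 := by
  rw [mem_supported, Set.subset_compl_singleton_iff, Finset.mem_coe, mem_vars_iff_degreeOf_ne_zero,
    not_not]

theorem mem_supported_compl_singleton_of_dvd [IsDomain R] {σ : Type*} {i : σ}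
    {f g : MvPolynomial σ R} (hg : g ∈ supported R {i}ᶜ) (hg0 : g ≠ 0) (hfg : f ∣ g) :
    f ∈ supported R {i}ᶜ := by
  obtain ⟨k, rfl⟩ := hfg
  rw [mem_supported_compl_singleton_iff, degreeOf_mul_eq (left_ne_zero_of_mul hg0)
    (right_ne_zero_of_mul hg0)] at hg
  rw [mem_supported_compl_singleton_iff]
  omega

end Elimination

section Pivot

@[simp]
theorem eliminate_fibreCubic (j k : Fin (n + 1))
    (G Q : MvPolynomial (Fin (n + 1) ⊕ Fin 4) K) :
    eliminate j G Q (fibreCubic n c K k) = fibreCubic n c K k := by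
  simp [fibreCubic, ← MvPolynomial.algebraMap_eq]

@[simp]
theorem aeval_fibreCubic {B : Type*} [CommRing B] [Algebra K B] (x : Fin (n + 1) → B)
    (y : Fin 4 → B) (j : Fin (n + 1)) : aeval (Sum.elim x y) (fibreCubic n c K j) =
      ∑ i, algebraMap K B (algebraMap ℚ K (c i j)) * y i ^ 3 := by
  simp [fibreCubic]

@[simp]
theorem aeval_cubicBundlePolyK {B : Type*} [CommRing B] [Algebra K B] (x : Fin (n + 1) → B)
    (y : Fin 4 → B) : aeval (Sum.elim x y) (cubicBundlePolyK n c K) =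
      ∑ j, x j * ∑ i, algebraMap K B (algebraMap ℚ K (c i j)) * y i ^ 3 := by
  simp [cubicBundlePolyK_eq_sum, -algebraMap_eq]

theorem eliminate_cubicBundlePolyK (j : Fin (n + 1)) :
    eliminate j (fibreCubic n c K j) (cubicBundlePolyK n c K) (cubicBundlePolyK n c K) = 0 := by
  conv_lhs => enter [2]; rw [cubicBundlePolyK_eq_sum]
  simp only [map_sum, map_mul, eliminate_X_inl, eliminate_fibreCubic, sub_mul, ite_mul, zero_mul,
    Finset.sum_sub_distrib, Finset.sum_ite_eq', Finset.mem_univ, if_true, mul_assoc]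
  rw [← Finset.mul_sum, ← cubicBundlePolyK_eq_sum]
  ring

theorem X_inl_mem_supported (R : Type*) [CommRing R] [Nontrivial R] {j k : Fin (n + 1)}
    (h : k ≠ j) :
    (X (Sum.inl k) : MvPolynomial (Fin (n + 1) ⊕ Fin 4) R) ∈ supported R {Sum.inl j}ᶜ :=
  X_mem_supported.2 (by simpa using h)

theorem X_inr_mem_supported (R : Type*) [CommRing R] [Nontrivial R] (j : Fin (n + 1)) (i : Fin 4) :
    (X (Sum.inr i) : MvPolynomial (Fin (n + 1) ⊕ Fin 4) R) ∈ supported R {Sum.inl j}ᶜ :=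
  X_mem_supported.2 (by simp)

theorem fibreCubic_mem_supported (j k : Fin (n + 1)) :
    fibreCubic n c K k ∈ supported K {Sum.inl j}ᶜ :=
  sum_mem fun i _ => mul_mem (Subalgebra.algebraMap_mem _ _)
    (pow_mem (X_inr_mem_supported n K j i) 3)

theorem eliminate_mem_supported (j : Fin (n + 1)) (f : MvPolynomial (Fin (n + 1) ⊕ Fin 4) K) :
    eliminate j (fibreCubic n c K j) (cubicBundlePolyK n c K) f ∈ supported K {Sum.inl j}ᶜ := by
  induction f using MvPolynomial.induction_on with
  | C a => rw [← MvPolynomial.algebraMap_eq, AlgHom.commutes]; exact Subalgebra.algebraMap_mem _ _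
  | add p q hp hq => rw [map_add]; exact add_mem hp hq
  | mul_X p i hp =>
    rw [map_mul]
    refine mul_mem hp ?_
    rcases i with k | i
    · rw [eliminate_X_inl]
      split_ifs with hk
      · subst hk
        rw [cubicBundlePolyK_eq_sum, ← Finset.add_sum_erase _ _ (Finset.mem_univ k), mul_comm,
          sub_add_cancel_left]
        refine neg_mem (sum_mem fun l hl => ?_)
        exact mul_mem (X_inl_mem_supported n K (by simpa using hl))
          (fibreCubic_mem_supported n c K k l)
      · rw [sub_zero]
        exact mul_mem (fibreCubic_mem_supported n c K j j) (X_inl_mem_supported n K hk)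
    · rw [eliminate_X_inr]
      exact X_inr_mem_supported n K j i

variable {n} {c} {j₀ j₁ : Fin (n + 1)}

theorem IsAdapted.not_fibreCubic_dvd_cubicBundlePolyK (h : IsAdapted c j₀ j₁) :
    ¬fibreCubic n c K j₀ ∣ cubicBundlePolyK n c K := fun hd => by
  have := map_dvd (aeval (Sum.elim (Pi.single j₁ 1) ![0, 1, 0, 0]) :
    MvPolynomial (Fin (n + 1) ⊕ Fin 4) K →ₐ[K] K) hd
  rw [aeval_fibreCubic, aeval_cubicBundlePolyK] at this
  simp [Fin.sum_univ_four, h.c10, h.c11, Pi.single_apply] at this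

theorem IsAdapted.not_fibreCubic_dvd_fibreCubic (h : IsAdapted c j₀ j₁) :
    ¬fibreCubic n c K j₀ ∣ fibreCubic n c K j₁ := fun hd => by
  have := map_dvd (aeval (Sum.elim (Pi.single j₁ 1) ![0, 1, 0, 0]) :
    MvPolynomial (Fin (n + 1) ⊕ Fin 4) K →ₐ[K] K) hd
  rw [aeval_fibreCubic, aeval_fibreCubic] at this
  simp [Fin.sum_univ_four, h.c10, h.c11] at this

theorem IsAdapted.prime_fibreCubic (h : IsAdapted c j₀ j₁) : Prime (fibreCubic n c K j₀) :=
  (h.prime_fibreCubic_pencil n K).1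

theorem IsAdapted.comap_eliminate_bot (h : IsAdapted c j₀ j₁) :
    (⊥ : Ideal _).comap (eliminate j₀ (fibreCubic n c K j₀) (cubicBundlePolyK n c K)) =
      Ideal.span {cubicBundlePolyK n c K} := by
  refine comap_eliminate_eq j₀ (isWeightedHomogeneous_fibreCubic n c K j₀)
    (isWeightedHomogeneous_cubicBundlePolyK n c K) (Ideal.mem_span_singleton_self _) bot_le ?_ ?_
    (by simp)
  · rw [Ideal.span_singleton_le_iff_mem, Ideal.mem_comap, eliminate_cubicBundlePolyK]
    exact Ideal.zero_mem _
  · intro f hf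
    rw [Ideal.mem_span_singleton] at hf ⊢
    obtain ⟨k, hk⟩ := hf
    have hp := h.prime_fibreCubic K
    obtain ⟨k, rfl⟩ := (hp.dvd_or_dvd ⟨f, hk.symm⟩).resolve_left
      (h.not_fibreCubic_dvd_cubicBundlePolyK K)
    refine ⟨k, mul_left_cancel₀ hp.ne_zero ?_⟩
    rw [hk]; ring

theorem IsAdapted.eliminate_eq_zero_iff (h : IsAdapted c j₀ j₁)
    {f : MvPolynomial (Fin (n + 1) ⊕ Fin 4) K} :
    eliminate j₀ (fibreCubic n c K j₀) (cubicBundlePolyK n c K) f = 0 ↔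
      f ∈ Ideal.span {cubicBundlePolyK n c K} := by
  rw [← h.comap_eliminate_bot K, Ideal.mem_comap, Ideal.mem_bot]

theorem IsAdapted.isPrime_span_cubicBundlePolyK (h : IsAdapted c j₀ j₁) :
    (Ideal.span {cubicBundlePolyK n c K}).IsPrime := by
  rw [← h.comap_eliminate_bot K]
  exact Ideal.IsPrime.comap _ (hK := Ideal.isPrime_bot)

/-- A nonzero form not involving `x_{j₀}` does not vanish on `X`. -/
theorem IsAdapted.notMem_span_of_mem_supported (h : IsAdapted c j₀ j₁)
    {f : MvPolynomial (Fin (n + 1) ⊕ Fin 4) K} {d : ℕ × ℕ}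
    (hf : f.IsWeightedHomogeneous (biWeight n) d) (hj : f ∈ supported K {Sum.inl j₀}ᶜ)
    (hf0 : f ≠ 0) : f ∉ Ideal.span {cubicBundlePolyK n c K} := by
  rw [← h.eliminate_eq_zero_iff K, eliminate_eq_of_mem_supported j₀ _ _ hf hj]
  exact mul_ne_zero (pow_ne_zero _ (h.prime_fibreCubic K).ne_zero) hf0

/-- The part of `P` not involving `x_{j₀}`. -/
theorem cubicBundlePolyK_sub (j₀ : Fin (n + 1)) :
    cubicBundlePolyK n c K - X (Sum.inl j₀) * fibreCubic n c K j₀ =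
      cubicBundlePolyK n (fun i => Function.update (c i) j₀ 0) K := by
  have h0 : ∀ j, fibreCubic n (fun i => Function.update (c i) j₀ 0) K j =
      if j = j₀ then 0 else fibreCubic n c K j := fun j => by
    split_ifs with hj
    · subst hj; simp [fibreCubic]
    · simp [fibreCubic, hj]
  rw [cubicBundlePolyK_eq_sum, cubicBundlePolyK_eq_sum,
    ← Finset.add_sum_erase _ _ (Finset.mem_univ j₀),
    ← Finset.add_sum_erase _ _ (Finset.mem_univ j₀), h0, if_pos rfl, mul_zero, zero_add,
    add_sub_cancel_left]
  refine Finset.sum_congr rfl fun j hj => ?_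
  rw [h0, if_neg (by simpa using hj)]

theorem IsAdapted.fibreCubic_notMem_span_pair (h : IsAdapted c j₀ j₁) {j₂ : Fin (n + 1)}
    (h0 : c 0 j₂ = 0) (h1 : c 1 j₂ = 0) (h2 : c 2 j₂ ≠ 0) :
    fibreCubic n c K j₂ ∉ Ideal.span {fibreCubic n c K j₀, fibreCubic n c K j₁} := fun hm => by
  obtain ⟨a, b, hab⟩ := Ideal.mem_span_pair.1 hm
  have key : ∀ i : Fin 4, (algebraMap ℚ K (c i j₂)) =
      constantCoeff a * algebraMap ℚ K (c i j₀) + constantCoeff b * algebraMap ℚ K (c i j₁) := by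
    intro i
    let ψ : MvPolynomial (Fin (n + 1) ⊕ Fin 4) K →ₐ[K] Polynomial K :=
      aeval (Sum.elim 0 (Pi.single i Polynomial.X))
    have hψ : ∀ k, ψ (fibreCubic n c K k) =
        Polynomial.C (algebraMap ℚ K (c i k)) * Polynomial.X ^ 3 := fun k => by
      simp only [ψ]
      rw [aeval_fibreCubic, Finset.sum_eq_single i]
      · simp
      · intro l _ hl; simp [hl]
      · simp
    have h0 : ∀ f, (ψ f).coeff 0 = constantCoeff f := fun f => by
      have : (Polynomial.constantCoeff).comp ψ.toRingHom =
          (constantCoeff : MvPolynomial (Fin (n + 1) ⊕ Fin 4) K →+* K) := by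
        refine MvPolynomial.ringHom_ext (fun r => ?_) fun k => ?_
        · simp [ψ]
        · rcases k with k | k
          · simp [ψ]
          · by_cases hk : k = i
            · subst hk; simp [ψ]
            · simp [ψ, hk]
      exact congrArg (fun φ : MvPolynomial (Fin (n + 1) ⊕ Fin 4) K →+* K => φ f) this
    have := congrArg (fun p => (ψ p).coeff 3) hab
    simp only [map_add, map_mul, hψ, ← mul_assoc, Polynomial.coeff_add,
      Polynomial.coeff_mul_X_pow', le_refl, if_true, Nat.sub_self, Polynomial.coeff_mul_C,
      Polynomial.coeff_C_zero, h0] at this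
    exact this.symm
  have k0 := key 0
  have k1 := key 1
  have k2 := key 2
  simp only [h0, h1, h.c00, h.c10, h.c01, h.c11, map_zero, map_one, mul_zero, mul_one, add_zero,
    zero_add] at k0 k1
  rw [← k0, ← k1, zero_mul, zero_mul, add_zero] at k2
  exact h2 (by simpa using k2)

/-- If there is a third cubic outside the pencil, `(F_{j₀}, P)` is prime. -/
theorem IsAdapted.isPrime_span_pair (h : IsAdapted c j₀ j₁) {j₂ : Fin (n + 1)} (hj₂ : j₂ ≠ j₀)
    (h0 : c 0 j₂ = 0) (h1 : c 1 j₂ = 0) (h2 : c 2 j₂ ≠ 0) :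
    (Ideal.span {fibreCubic n c K j₀, cubicBundlePolyK n c K}).IsPrime := by
  set c' : Fin 4 → Fin (n + 1) → ℚ := fun i => Function.update (c i) j₀ 0 with hc'
  have hF : ∀ j, j ≠ j₀ → fibreCubic n c' K j = fibreCubic n c K j := fun j hj => by
    simp [fibreCubic, hc', hj]
  set P' := cubicBundlePolyK n c' K with hP'
  have hPP' : cubicBundlePolyK n c K = P' + X (Sum.inl j₀) * fibreCubic n c K j₀ := by
    rw [hP', ← cubicBundlePolyK_sub, sub_add_cancel]
  have hpair : Ideal.span {fibreCubic n c K j₀, cubicBundlePolyK n c K} =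
      Ideal.span {fibreCubic n c K j₀, P'} := by
    rw [hPP', Ideal.span_pair_add_mul_left]
  have hprime := h.prime_fibreCubic_pencil n K
  have hP'mem : P' ∉ Ideal.span {fibreCubic n c K j₀, fibreCubic n c K j₁} := fun hm => by
    let ε : MvPolynomial (Fin (n + 1) ⊕ Fin 4) K →ₐ[K] MvPolynomial (Fin (n + 1) ⊕ Fin 4) K :=
      aeval (Sum.elim (Pi.single j₂ 1) fun i => X (Sum.inr i))
    have hε : ∀ d k, ε (fibreCubic n d K k) = fibreCubic n d K k := fun d k => by
      simp only [ε]
      rw [aeval_fibreCubic]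
      rfl
    refine h.fibreCubic_notMem_span_pair K h0 h1 h2 ?_
    have := Ideal.mem_map_of_mem ε hm
    rw [Ideal.map_span, Set.image_pair, hε, hε] at this
    rw [← hF j₂ hj₂]
    convert this using 1
    rw [hP', cubicBundlePolyK_eq_sum, map_sum, Finset.sum_eq_single j₂]
    · rw [map_mul, hε]; simp [ε]
    · intro b _ hb; rw [map_mul]; simp [ε, hb]
    · simp
  rw [hpair, ← comap_eliminate_eq j₁ (isWeightedHomogeneous_fibreCubic n c' K j₁)
    (isWeightedHomogeneous_cubicBundlePolyK n c' K) (J := Ideal.span {fibreCubic n c K j₀})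
    (I := Ideal.span {fibreCubic n c K j₀, P'}) (Ideal.subset_span (Or.inr rfl))
    (Ideal.span_mono (by simp)) ?_ ?_ ?_]
  · have := (Ideal.span_singleton_prime hprime.1.ne_zero).2 hprime.1
    exact Ideal.IsPrime.comap _
  · rw [Ideal.span_le]
    rintro x (rfl | rfl)
    · simp
    · simp [hP', eliminate_cubicBundlePolyK]
  · intro f hf
    rw [hF j₁ h.ne] at hf
    obtain ⟨a, b, hab⟩ := Ideal.mem_span_pair.1 hf
    have hb : b * P' ∈ Ideal.span {fibreCubic n c K j₀, fibreCubic n c K j₁} :=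
      Ideal.mem_span_pair.2 ⟨-a, f, by linear_combination -hab⟩
    obtain ⟨b0, b1, rfl⟩ := Ideal.mem_span_pair.1 ((hprime.2.mem_or_mem hb).resolve_right hP'mem)
    obtain ⟨k, hk⟩ := (hprime.1.dvd_or_dvd (a := fibreCubic n c K j₁) (b := f - b1 * P')
      ⟨a + b0 * P', by linear_combination -hab⟩).resolve_left (h.not_fibreCubic_dvd_fibreCubic K)
    exact Ideal.mem_span_pair.2 ⟨k, b1, by linear_combination -hk⟩
  · exact fun f hf d => weightedHomogeneousComponent_mem_span
      (by rintro _ rfl; exact ⟨_, isWeightedHomogeneous_fibreCubic n c K j₀⟩) hf d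

theorem IsAdapted.isPrime_span_fibreCubic_X (h : IsAdapted c j₀ j₁) :
    (Ideal.span {fibreCubic n c K j₀, X (Sum.inl j₁)}).IsPrime := by
  let ε : MvPolynomial (Fin (n + 1) ⊕ Fin 4) K →ₐ[K] MvPolynomial (Fin (n + 1) ⊕ Fin 4) K :=
    aeval (Sum.elim (fun k => if k = j₁ then 0 else X (Sum.inl k)) fun i => X (Sum.inr i))
  have hεF : ε (fibreCubic n c K j₀) = fibreCubic n c K j₀ := by
    simp only [ε]
    rw [aeval_fibreCubic]
    rfl
  have hε : ∀ f, f - ε f ∈ Ideal.span {X (Sum.inl j₁)} := fun f => by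
    rw [← Ideal.Quotient.eq]
    let mk := Ideal.Quotient.mk
      (Ideal.span {(X (Sum.inl j₁) : MvPolynomial (Fin (n + 1) ⊕ Fin 4) K)})
    have : mk = mk.comp ε.toRingHom := by
      refine MvPolynomial.ringHom_ext (fun r => by simp [ε]) fun k => ?_
      rcases k with k | k
      · by_cases hk : k = j₁
        · subst hk
          simpa [ε] using Ideal.Quotient.eq_zero_iff_mem.2 (Ideal.mem_span_singleton_self _)
        · simp [ε, hk]
      · simp [ε]
    exact congrArg (fun φ : MvPolynomial (Fin (n + 1) ⊕ Fin 4) K →+* _ => φ f) this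
  have hp := h.prime_fibreCubic K
  have := (Ideal.span_singleton_prime hp.ne_zero).2 hp
  have heq : Ideal.span {fibreCubic n c K j₀, X (Sum.inl j₁)} =
      (Ideal.span {fibreCubic n c K j₀}).comap ε := by
    refine le_antisymm ?_ fun f hf => ?_
    · rw [Ideal.span_le]
      rintro x (rfl | rfl)
      · simp [hεF]
      · simp [ε]
    · rw [show f = ε f + (f - ε f) by ring, Ideal.span_insert]
      exact Submodule.add_mem_sup hf (hε f)
  rw [heq]
  exact Ideal.IsPrime.comap _

end Pivot

section PrimeDivisors

variable {n} {c} {K} {j₀ j₁ : Fin (n + 1)}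

theorem IsLocalGenerator.isPrimeDivisor {p : Ideal (MvPolynomial (Fin (n + 1) ⊕ Fin 4) K)}
    {π : MvPolynomial (Fin (n + 1) ⊕ Fin 4) K}
    (h : IsLocalGenerator (cubicBundlePolyK n c K) p π)
    (hP : (Ideal.span {cubicBundlePolyK n c K}).IsPrime) (hp : p.IsPrime)
    (mem : cubicBundlePolyK n c K ∈ p)
    (bihom : ∀ f ∈ p, ∀ d : ℕ × ℕ, weightedHomogeneousComponent (biWeight n) d f ∈ p)
    (relevant_x : ∃ j : Fin (n + 1), X (Sum.inl j) ∉ p)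
    (relevant_y : ∃ i : Fin 4, X (Sum.inr i) ∉ p) : IsPrimeDivisor n c K p where
  prime := hp
  bihom := bihom
  relevant_x := relevant_x
  relevant_y := relevant_y
  mem := mem
  exists_lt := ⟨_, hP, Ideal.mem_span_singleton_self _,
    lt_of_le_of_ne ((Ideal.span_singleton_le_iff_mem _).2 mem) fun e => h.notMem (e ▸ h.mem)⟩
  height_one q hq hPq hqp r hr hPr hrq := by
    rw [h.eq_of_lt hP mem hq hPq hqp, h.eq_of_lt hP mem hr hPr (hrq.trans_lt hqp)]

theorem IsPrimeDivisor.span_le {p : Ideal (MvPolynomial (Fin (n + 1) ⊕ Fin 4) K)}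
    (hp : IsPrimeDivisor n c K p) : Ideal.span {cubicBundlePolyK n c K} ≤ p :=
  (Ideal.span_singleton_le_iff_mem _).2 hp.mem

theorem IsPrimeDivisor.eq_of_le {p q : Ideal (MvPolynomial (Fin (n + 1) ⊕ Fin 4) K)}
    (hp : IsPrimeDivisor n c K p) (hP : (Ideal.span {cubicBundlePolyK n c K}).IsPrime)
    (hq : q.IsPrime) (hPq : cubicBundlePolyK n c K ∈ q)
    {f : MvPolynomial (Fin (n + 1) ⊕ Fin 4) K} (hfq : f ∈ q)
    (hfP : f ∉ Ideal.span {cubicBundlePolyK n c K}) (hqp : q ≤ p) : p = q := by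
  by_contra hne
  refine hfP ?_
  rwa [hp.height_one q hq hPq (lt_of_le_of_ne hqp (Ne.symm hne)) _ hP
    (Ideal.mem_span_singleton_self _) ((Ideal.span_singleton_le_iff_mem _).2 hPq)]

theorem ordAt_congr (p : PrimeDivisor n c K) {f g : MvPolynomial (Fin (n + 1) ⊕ Fin 4) K}
    (hfg : f - g ∈ Ideal.span {cubicBundlePolyK n c K}) : ordAt n c K p f = ordAt n c K p g := by
  have (m : ℕ) (s : MvPolynomial (Fin (n + 1) ⊕ Fin 4) K) :
      s * f ∈ p.1 ^ m ⊔ Ideal.span {cubicBundlePolyK n c K} ↔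
        s * g ∈ p.1 ^ m ⊔ Ideal.span {cubicBundlePolyK n c K} := by
    rw [show s * f = s * (f - g) + s * g by ring]
    exact Ideal.add_mem_iff_right _ (Ideal.mem_sup_right (Ideal.mul_mem_left _ _ hfg))
  simp only [ordAt, this]

section LocalGenerator

variable {p : PrimeDivisor n c K} {π f g : MvPolynomial (Fin (n + 1) ⊕ Fin 4) K}

theorem IsLocalGenerator.ordAt_eq (h : IsLocalGenerator (cubicBundlePolyK n c K) p.1 π)
    (hP : (Ideal.span {cubicBundlePolyK n c K}).IsPrime)
    {s t : MvPolynomial (Fin (n + 1) ⊕ Fin 4) K} {m : ℕ} (hs : s ∉ p.1) (ht : t ∉ p.1)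
    (hf : s * f - t * π ^ m ∈ Ideal.span {cubicBundlePolyK n c K}) : ordAt n c K p f = m :=
  have := p.2.prime
  h.sSup_eq hP p.2.mem hs ht hf

theorem IsLocalGenerator.ordAt_self (h : IsLocalGenerator (cubicBundlePolyK n c K) p.1 π)
    (hP : (Ideal.span {cubicBundlePolyK n c K}).IsPrime) : ordAt n c K p π = 1 :=
  have h1 : 1 ∉ p.1 := p.1.ne_top_iff_one.1 p.2.prime.ne_top
  h.ordAt_eq hP h1 h1 (by simp)

theorem IsLocalGenerator.ordAt_eq_zero_iff
    (h : IsLocalGenerator (cubicBundlePolyK n c K) p.1 π)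
    (hP : (Ideal.span {cubicBundlePolyK n c K}).IsPrime)
    (hf : f ∉ Ideal.span {cubicBundlePolyK n c K}) : ordAt n c K p f = 0 ↔ f ∉ p.1 := by
  have := p.2.prime
  constructor
  · intro h0 hfp
    obtain ⟨m, s, hs, t, ht, e⟩ := h.exists_eq_mul_pow hP p.2.mem hf
    rw [h.ordAt_eq hP hs ht e] at h0
    subst h0
    refine ht ?_
    rw [show t = s * f - (s * f - t * π ^ 0) by ring]
    exact sub_mem (Ideal.mul_mem_left _ _ hfp) (p.2.span_le e)
  · exact fun hfp => h.ordAt_eq hP (p.1.ne_top_iff_one.1 p.2.prime.ne_top) hfp (by simp)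

theorem IsLocalGenerator.ordAt_mul (h : IsLocalGenerator (cubicBundlePolyK n c K) p.1 π)
    (hP : (Ideal.span {cubicBundlePolyK n c K}).IsPrime)
    (hf : f ∉ Ideal.span {cubicBundlePolyK n c K})
    (hg : g ∉ Ideal.span {cubicBundlePolyK n c K}) :
    ordAt n c K p (f * g) = ordAt n c K p f + ordAt n c K p g := by
  have hp := p.2.prime
  obtain ⟨m, s, hs, t, ht, e⟩ := h.exists_eq_mul_pow hP p.2.mem hf
  obtain ⟨m', s', hs', t', ht', e'⟩ := h.exists_eq_mul_pow hP p.2.mem hg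
  rw [h.ordAt_eq hP hs ht e, h.ordAt_eq hP hs' ht' e']
  refine h.ordAt_eq hP (s := s * s') (t := t * t') (fun hm => (hp.mem_or_mem hm).elim hs hs')
    (fun hm => (hp.mem_or_mem hm).elim ht ht') ?_
  rw [show s * s' * (f * g) - t * t' * π ^ (m + m') = s' * g * (s * f - t * π ^ m) +
    t * π ^ m * (s' * g - t' * π ^ m') by ring]
  exact add_mem (Ideal.mul_mem_left _ _ e) (Ideal.mul_mem_left _ _ e')

end LocalGenerator

/-- The divisor of `X` cut out by a prime form `ϖ` not involving `x_{j₀}`, away from the locus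
where the pivot coefficient vanishes. -/
def pivotDivisor (c : Fin 4 → Fin (n + 1) → ℚ) (j₀ : Fin (n + 1))
    (ϖ : MvPolynomial (Fin (n + 1) ⊕ Fin 4) K) : Ideal (MvPolynomial (Fin (n + 1) ⊕ Fin 4) K) :=
  (Ideal.span {ϖ}).comap (eliminate j₀ (fibreCubic n c K j₀) (cubicBundlePolyK n c K))

/-- Prime forms not involving `x_{j₀}` whose divisor in `ℙⁿ⁻¹ × ℙ³` is the image of a divisor
of `X`. -/
structure IsPivotForm (c : Fin 4 → Fin (n + 1) → ℚ) (j₀ : Fin (n + 1))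
    (ϖ : MvPolynomial (Fin (n + 1) ⊕ Fin 4) K) : Prop where
  prime : Prime ϖ
  homogeneous : ∃ d, ϖ.IsWeightedHomogeneous (biWeight n) d
  supported : ϖ ∈ supported K {Sum.inl j₀}ᶜ
  not_dvd : ¬ϖ ∣ fibreCubic n c K j₀
  relevant : ∃ j, j ≠ j₀ ∧ ¬ϖ ∣ X (Sum.inl j)

variable {f ϖ : MvPolynomial (Fin (n + 1) ⊕ Fin 4) K}

theorem mem_pivotDivisor : f ∈ pivotDivisor c j₀ ϖ ↔
    ϖ ∣ eliminate j₀ (fibreCubic n c K j₀) (cubicBundlePolyK n c K) f := by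
  rw [pivotDivisor, Ideal.mem_comap, Ideal.mem_span_singleton]

theorem mem_pivotDivisor_of_mem_supported (hϖ : IsPivotForm c j₀ ϖ) {d : ℕ × ℕ}
    (hf : f.IsWeightedHomogeneous (biWeight n) d) (hj : f ∈ supported K {Sum.inl j₀}ᶜ) :
    f ∈ pivotDivisor c j₀ ϖ ↔ ϖ ∣ f := by
  rw [mem_pivotDivisor, eliminate_eq_of_mem_supported _ _ _ hf hj]
  exact ⟨fun h => (hϖ.prime.dvd_or_dvd h).resolve_left fun h1 =>
    hϖ.not_dvd (hϖ.prime.dvd_of_dvd_pow h1), fun h => h.mul_left _⟩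

theorem weightedHomogeneousComponent_mem_pivotDivisor
    (hϖ : ∃ d, ϖ.IsWeightedHomogeneous (biWeight n) d) (hf : f ∈ pivotDivisor c j₀ ϖ)
    (d : ℕ × ℕ) : weightedHomogeneousComponent (biWeight n) d f ∈ pivotDivisor c j₀ ϖ := by
  rw [pivotDivisor, Ideal.mem_comap, ← weightedHomogeneousComponent_map_algHom _
    (eliminateDegree_injective 3) _ (isWeightedHomogeneous_eliminate_X j₀
    (isWeightedHomogeneous_fibreCubic n c K j₀) (isWeightedHomogeneous_cubicBundlePolyK n c K))]
  exact weightedHomogeneousComponent_mem_span (by rintro _ rfl; exact hϖ) hf _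

theorem exists_pow_mul_mem_of_mem_pivotDivisor (hϖ : ∃ d, ϖ.IsWeightedHomogeneous (biWeight n) d)
    (hf : f ∈ pivotDivisor c j₀ ϖ) :
    ∃ m, fibreCubic n c K j₀ ^ m * f ∈ Ideal.span {ϖ} ⊔ Ideal.span {cubicBundlePolyK n c K} := by
  refine weightedHomogeneousComponent_induction (biWeight n) (motive := fun f => ∃ m,
    fibreCubic n c K j₀ ^ m * f ∈ Ideal.span {ϖ} ⊔ Ideal.span {cubicBundlePolyK n c K}) f
    ⟨0, by simp⟩ ?_ fun d => ⟨d.1, ?_⟩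
  · rintro a b ⟨k, hk⟩ ⟨l, hl⟩
    refine ⟨k + l, ?_⟩
    rw [show fibreCubic n c K j₀ ^ (k + l) * (a + b) = fibreCubic n c K j₀ ^ l *
      (fibreCubic n c K j₀ ^ k * a) + fibreCubic n c K j₀ ^ k * (fibreCubic n c K j₀ ^ l * b) by
      ring]
    exact add_mem (Ideal.mul_mem_left _ _ hk) (Ideal.mul_mem_left _ _ hl)
  · have h1 := eliminate_sub_mem j₀ (fibreCubic n c K j₀) (cubicBundlePolyK n c K)
      (weightedHomogeneousComponent_isWeightedHomogeneous (w := biWeight n) d f)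
    have h2 := weightedHomogeneousComponent_mem_pivotDivisor hϖ hf d
    rw [← sub_sub_cancel (eliminate j₀ (fibreCubic n c K j₀) (cubicBundlePolyK n c K)
      (weightedHomogeneousComponent (biWeight n) d f)) (fibreCubic n c K j₀ ^ d.1 * _)]
    exact sub_mem (Ideal.mem_sup_left h2) (Ideal.mem_sup_right h1)

theorem IsPivotForm.isPrime (hϖ : IsPivotForm c j₀ ϖ) : (pivotDivisor c j₀ ϖ).IsPrime := by
  have := (Ideal.span_singleton_prime hϖ.prime.ne_zero).2 hϖ.prime
  exact Ideal.IsPrime.comap _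

theorem IsPivotForm.isLocalGenerator (hϖ : IsPivotForm c j₀ ϖ) (h : IsAdapted c j₀ j₁) :
    IsLocalGenerator (cubicBundlePolyK n c K) (pivotDivisor c j₀ ϖ) ϖ := by
  obtain ⟨d, hd⟩ := hϖ.homogeneous
  have hp := hϖ.isPrime
  refine ⟨(mem_pivotDivisor_of_mem_supported hϖ hd hϖ.supported).2 dvd_rfl,
    h.notMem_span_of_mem_supported K hd hϖ.supported hϖ.prime.ne_zero, fun a ha => ?_⟩
  obtain ⟨m, hm⟩ := exists_pow_mul_mem_of_mem_pivotDivisor hϖ.homogeneous ha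
  refine ⟨_, fun hF => hϖ.not_dvd ?_, hm⟩
  exact (mem_pivotDivisor_of_mem_supported hϖ (isWeightedHomogeneous_fibreCubic n c K j₀)
    (fibreCubic_mem_supported n c K j₀ j₀)).1 (hp.mem_of_pow_mem _ hF)

theorem X_not_dvd_X {σ R : Type*} [CommRing R] [IsDomain R] {i j : σ} (hij : i ≠ j)
    {p : MvPolynomial σ R} (hp : Prime p) (hi : p ∣ X i) : ¬p ∣ X j := fun hj => by
  have h1 := (hp.irreducible.associated_of_dvd X_prime.irreducible hi)
  have h2 := h1.symm.dvd.trans hj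
  rw [X_dvd_X] at h2
  simp_all

theorem IsPivotForm.isPrimeDivisor (hϖ : IsPivotForm c j₀ ϖ) (h : IsAdapted c j₀ j₁) :
    IsPrimeDivisor n c K (pivotDivisor c j₀ ϖ) := by
  refine (hϖ.isLocalGenerator h).isPrimeDivisor (h.isPrime_span_cubicBundlePolyK K) hϖ.isPrime ?_
    (fun f hf d => weightedHomogeneousComponent_mem_pivotDivisor hϖ.homogeneous hf d) ?_ ?_
  · rw [mem_pivotDivisor, eliminate_cubicBundlePolyK]
    exact dvd_zero _
  · obtain ⟨j, hj, hd⟩ := hϖ.relevant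
    refine ⟨j, fun hm => hd ?_⟩
    exact (mem_pivotDivisor_of_mem_supported hϖ (isWeightedHomogeneous_X_inl n K j)
      (X_inl_mem_supported n K hj)).1 hm
  · by_contra! hall
    have hy : ∀ i : Fin 4, ϖ ∣ X (Sum.inr i) := fun i =>
      (mem_pivotDivisor_of_mem_supported hϖ (isWeightedHomogeneous_X_inr n K i)
        (X_inr_mem_supported n K j₀ i)).1 (hall i)
    exact X_not_dvd_X (by simp) hϖ.prime (hy 0) (hy 1)

/-- Prime divisors not contained in the vanishing locus of the pivot coefficient. -/
theorem IsPrimeDivisor.exists_pivotForm {p : Ideal (MvPolynomial (Fin (n + 1) ⊕ Fin 4) K)}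
    (hp : IsPrimeDivisor n c K p) (h : IsAdapted c j₀ j₁) (hF : fibreCubic n c K j₀ ∉ p) :
    ∃ ϖ, IsPivotForm c j₀ ϖ ∧ p = pivotDivisor c j₀ ϖ := by
  have hprime := hp.prime
  obtain ⟨q, hq, hPq, hqp⟩ := hp.exists_lt
  obtain ⟨g, hgp, hgq⟩ := Set.exists_of_ssubset hqp
  have hgP : g ∉ Ideal.span {cubicBundlePolyK n c K} := fun hg =>
    hgq ((Ideal.span_singleton_le_iff_mem _).2 hPq hg)
  obtain ⟨d, hd⟩ := exists_weightedHomogeneousComponent_notMem (biWeight n) hgP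
  set f := weightedHomogeneousComponent (biWeight n) d g with hf
  have hfd : f.IsWeightedHomogeneous (biWeight n) d :=
    weightedHomogeneousComponent_isWeightedHomogeneous _ _
  set f' := eliminate j₀ (fibreCubic n c K j₀) (cubicBundlePolyK n c K) f with hf'
  have hf'0 : f' ≠ 0 := fun h0 => hd ((h.eliminate_eq_zero_iff K).1 h0)
  have hf'p : f' ∈ p := by
    have := p.add_mem (hp.span_le (eliminate_sub_mem j₀ (fibreCubic n c K j₀) _ hfd))
      (p.mul_mem_left (fibreCubic n c K j₀ ^ d.1) (hp.bihom g hgp d))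
    rwa [sub_add_cancel] at this
  have hf'd := hfd.map_algHom (eliminateDegree 3) _ (isWeightedHomogeneous_eliminate_X j₀
    (isWeightedHomogeneous_fibreCubic n c K j₀) (isWeightedHomogeneous_cubicBundlePolyK n c K))
  obtain ⟨s, hs, u, hu⟩ := UniqueFactorizationMonoid.exists_prime_factors f' hf'0
  have hsp : s.prod ∈ p := by
    rw [← Units.eq_mul_inv_iff_mul_eq] at hu
    rw [hu]
    exact p.mul_mem_right _ hf'p
  obtain ⟨ϖ, hϖs, hϖp⟩ := (hprime.multiset_prod_mem_iff_exists_mem s).1 hsp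
  have hϖd : ϖ ∣ f' := hu ▸ (Multiset.dvd_prod hϖs).mul_right _
  have hpiv : IsPivotForm c j₀ ϖ := by
    refine ⟨hs _ hϖs, ?_, mem_supported_compl_singleton_of_dvd
      (eliminate_mem_supported n c K j₀ f) hf'0 hϖd, fun hdvd => hF (p.mem_of_dvd hdvd hϖp), ?_⟩
    · obtain ⟨k, hk⟩ := hϖd
      exact exists_isWeightedHomogeneous_biWeight_of_mul (g := k)
        (by rw [← hk]; exact hf'd) (hk ▸ hf'0)
    · by_contra! hall
      obtain ⟨k, hk⟩ := hp.relevant_x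
      have hmem : ∀ j, j ≠ j₀ → X (Sum.inl j) ∈ p := fun j hj => p.mem_of_dvd (hall j hj) hϖp
      obtain rfl : k = j₀ := by_contra fun hne => hk (hmem k hne)
      have hP := hp.mem
      rw [cubicBundlePolyK_eq_sum, ← Finset.add_sum_erase _ _ (Finset.mem_univ k),
        Ideal.add_mem_iff_left] at hP
      · exact (hprime.mem_or_mem hP).elim hk hF
      · exact sum_mem fun j hj => p.mul_mem_right _ (hmem j (Finset.ne_of_mem_erase hj))
  refine ⟨ϖ, hpiv, ?_⟩
  have hpd := hpiv.isPrimeDivisor h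
  have hgen := hpiv.isLocalGenerator h
  refine hp.eq_of_le (h.isPrime_span_cubicBundlePolyK K) hpd.prime hpd.mem hgen.mem hgen.notMem
    fun a ha => ?_
  obtain ⟨m, hm⟩ := exists_pow_mul_mem_of_mem_pivotDivisor hpiv.homogeneous ha
  refine (hprime.mem_or_mem (sup_le ?_ hp.span_le hm)).resolve_left fun hF' =>
    hF (hprime.mem_of_pow_mem _ hF')
  exact (Ideal.span_singleton_le_iff_mem _).2 hϖp

end PrimeDivisors

section Boundary

variable {n} {c} {j₀ j₁ j₂ : Fin (n + 1)}

theorem notMem_span_of_map_ne_zero {A B : Type*} [CommRing A] [CommRing B] (φ : A →+* B)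
    {s : Set A} {f : A} (hs : ∀ g ∈ s, φ g = 0) (hf : φ f ≠ 0) : f ∉ Ideal.span s :=
  fun hm => hf ((Ideal.span_le (I := RingHom.ker φ)).2 hs hm)

theorem IsAdapted.fibreCubic_notMem (h : IsAdapted c j₀ j₁) :
    fibreCubic n c K j₀ ∉ Ideal.span {cubicBundlePolyK n c K} :=
  h.notMem_span_of_mem_supported K (isWeightedHomogeneous_fibreCubic n c K j₀)
    (fibreCubic_mem_supported n c K j₀ j₀) (h.prime_fibreCubic K).ne_zero

theorem IsAdapted.X_inl_notMem (h : IsAdapted c j₀ j₁) {j : Fin (n + 1)} (hj : j ≠ j₀) :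
    X (Sum.inl j) ∉ Ideal.span {cubicBundlePolyK n c K} :=
  h.notMem_span_of_mem_supported K (isWeightedHomogeneous_X_inl n K j)
    (X_inl_mem_supported n K hj) (X_ne_zero _)

theorem IsAdapted.X_inr_notMem (h : IsAdapted c j₀ j₁) (i : Fin 4) :
    X (Sum.inr i) ∉ Ideal.span {cubicBundlePolyK n c K} :=
  h.notMem_span_of_mem_supported K (isWeightedHomogeneous_X_inr n K i)
    (X_inr_mem_supported n K j₀ i) (X_ne_zero _)

/-- Over a point of `ℙⁿ` outside the pencil, the pivot coefficient cuts out a prime divisor. -/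
theorem IsAdapted.isLocalGenerator_span_pair (h : IsAdapted c j₀ j₁) :
    IsLocalGenerator (cubicBundlePolyK n c K)
      (Ideal.span {fibreCubic n c K j₀, cubicBundlePolyK n c K}) (fibreCubic n c K j₀) := by
  refine ⟨Ideal.subset_span (by simp), h.fibreCubic_notMem K, fun a ha => ⟨1, ?_, ?_⟩⟩
  · refine notMem_span_of_map_ne_zero (aeval (Sum.elim 0 0) :
      MvPolynomial (Fin (n + 1) ⊕ Fin 4) K →ₐ[K] K).toRingHom ?_ (by simp)
    rintro _ (rfl | rfl)
    · exact (aeval_fibreCubic n c K _ _ _).trans (by simp)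
    · exact (aeval_cubicBundlePolyK n c K _ _).trans (by simp)
  · rwa [one_mul, ← Ideal.span_insert]

theorem IsAdapted.isPrimeDivisor_span_pair (h : IsAdapted c j₀ j₁) (hj₂ : j₂ ≠ j₀)
    (h0 : c 0 j₂ = 0) (h1 : c 1 j₂ = 0) (h2 : c 2 j₂ ≠ 0) :
    IsPrimeDivisor n c K (Ideal.span {fibreCubic n c K j₀, cubicBundlePolyK n c K}) := by
  refine (h.isLocalGenerator_span_pair K).isPrimeDivisor (h.isPrime_span_cubicBundlePolyK K)
    (h.isPrime_span_pair K hj₂ h0 h1 h2) (Ideal.subset_span (by simp)) ?_ ⟨j₁, ?_⟩ ⟨1, ?_⟩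
  · refine fun f hf d => weightedHomogeneousComponent_mem_span ?_ hf d
    rintro _ (rfl | rfl)
    · exact ⟨_, isWeightedHomogeneous_fibreCubic n c K j₀⟩
    · exact ⟨_, isWeightedHomogeneous_cubicBundlePolyK n c K⟩
  · refine notMem_span_of_map_ne_zero (aeval (Sum.elim 1 0) :
      MvPolynomial (Fin (n + 1) ⊕ Fin 4) K →ₐ[K] K).toRingHom ?_ (by simp)
    rintro _ (rfl | rfl)
    · exact (aeval_fibreCubic n c K _ _ _).trans (by simp)
    · exact (aeval_cubicBundlePolyK n c K _ _).trans (by simp)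
  · refine notMem_span_of_map_ne_zero (aeval (Sum.elim 0 ![0, 1, 0, 0]) :
      MvPolynomial (Fin (n + 1) ⊕ Fin 4) K →ₐ[K] K).toRingHom ?_ (by simp)
    rintro _ (rfl | rfl)
    · exact (aeval_fibreCubic n c K _ _ _).trans (by simp [Fin.sum_univ_four, h.c10])
    · exact (aeval_cubicBundlePolyK n c K _ _).trans (by simp)

theorem IsAdapted.eq_span_pair (h : IsAdapted c j₀ j₁) (hj₂ : j₂ ≠ j₀)
    (h0 : c 0 j₂ = 0) (h1 : c 1 j₂ = 0) (h2 : c 2 j₂ ≠ 0)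
    {p : Ideal (MvPolynomial (Fin (n + 1) ⊕ Fin 4) K)} (hp : IsPrimeDivisor n c K p)
    (hF : fibreCubic n c K j₀ ∈ p) :
    p = Ideal.span {fibreCubic n c K j₀, cubicBundlePolyK n c K} := by
  refine hp.eq_of_le (h.isPrime_span_cubicBundlePolyK K) (h.isPrime_span_pair K hj₂ h0 h1 h2)
    (Ideal.subset_span (by simp)) (Ideal.subset_span (by simp)) (h.fibreCubic_notMem K) ?_
  rw [Ideal.span_le]
  rintro _ (rfl | rfl)
  exacts [hF, hp.mem]

/- The case of the projective line. -/

theorem cubicBundlePolyK_eq_add (hne : j₁ ≠ j₀) (hall : ∀ j, j = j₀ ∨ j = j₁) :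
    cubicBundlePolyK n c K = X (Sum.inl j₀) * fibreCubic n c K j₀ +
      X (Sum.inl j₁) * fibreCubic n c K j₁ := by
  have : (Finset.univ : Finset (Fin (n + 1))) = {j₀, j₁} := by
    ext j; simpa using hall j
  rw [cubicBundlePolyK_eq_sum, this, Finset.sum_pair hne.symm]

theorem IsAdapted.X_notMem_span_fibreCubic_X (h : IsAdapted c j₀ j₁) :
    X (Sum.inl j₀) ∉ Ideal.span {fibreCubic n c K j₀, X (Sum.inl j₁)} := by
  refine notMem_span_of_map_ne_zero (aeval (Sum.elim (Pi.single j₀ 1) 0) :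
    MvPolynomial (Fin (n + 1) ⊕ Fin 4) K →ₐ[K] K).toRingHom ?_ (by simp)
  rintro _ (rfl | rfl)
  · exact (aeval_fibreCubic n c K _ _ _).trans (by simp)
  · simp [h.ne]

theorem IsAdapted.isLocalGenerator_span_fibreCubic_X (h : IsAdapted c j₀ j₁)
    (hall : ∀ j, j = j₀ ∨ j = j₁) : IsLocalGenerator (cubicBundlePolyK n c K)
      (Ideal.span {fibreCubic n c K j₀, X (Sum.inl j₁)}) (X (Sum.inl j₁)) := by
  refine ⟨Ideal.subset_span (by simp), h.X_inl_notMem K h.ne,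
    fun a ha => ⟨_, h.X_notMem_span_fibreCubic_X K, ?_⟩⟩
  obtain ⟨u, v, rfl⟩ := Ideal.mem_span_pair.1 ha
  rw [← Ideal.span_insert, Ideal.mem_span_pair]
  exact ⟨X (Sum.inl j₀) * v - u * fibreCubic n c K j₁, u, by
    rw [cubicBundlePolyK_eq_add K h.ne hall]; ring⟩

theorem IsAdapted.isPrimeDivisor_span_fibreCubic_X (h : IsAdapted c j₀ j₁)
    (hall : ∀ j, j = j₀ ∨ j = j₁) :
    IsPrimeDivisor n c K (Ideal.span {fibreCubic n c K j₀, X (Sum.inl j₁)}) := by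
  refine (h.isLocalGenerator_span_fibreCubic_X K hall).isPrimeDivisor
    (h.isPrime_span_cubicBundlePolyK K) (h.isPrime_span_fibreCubic_X K) ?_ ?_
    ⟨j₀, h.X_notMem_span_fibreCubic_X K⟩ ⟨1, ?_⟩
  · rw [cubicBundlePolyK_eq_add K h.ne hall]
    exact Ideal.mem_span_pair.2 ⟨X (Sum.inl j₀), fibreCubic n c K j₁, by ring⟩
  · refine fun f hf d => weightedHomogeneousComponent_mem_span ?_ hf d
    rintro _ (rfl | rfl)
    · exact ⟨_, isWeightedHomogeneous_fibreCubic n c K j₀⟩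
    · exact ⟨_, isWeightedHomogeneous_X_inl n K j₁⟩
  · refine notMem_span_of_map_ne_zero (aeval (Sum.elim 0 ![0, 1, 0, 0]) :
      MvPolynomial (Fin (n + 1) ⊕ Fin 4) K →ₐ[K] K).toRingHom ?_ (by simp)
    rintro _ (rfl | rfl)
    · exact (aeval_fibreCubic n c K _ _ _).trans (by simp [Fin.sum_univ_four, h.c10])
    · simp

theorem X_inl_notMem_span_pencil (j₀ j₁ j : Fin (n + 1)) :
    X (Sum.inl j) ∉ Ideal.span {fibreCubic n c K j₀, fibreCubic n c K j₁} := by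
  refine notMem_span_of_map_ne_zero (aeval (Sum.elim 1 0) :
    MvPolynomial (Fin (n + 1) ⊕ Fin 4) K →ₐ[K] K).toRingHom ?_ (by simp)
  rintro _ (rfl | rfl) <;> exact (aeval_fibreCubic n c K _ _ _).trans (by simp)

theorem IsAdapted.isLocalGenerator_span_pencil (h : IsAdapted c j₀ j₁)
    (hall : ∀ j, j = j₀ ∨ j = j₁) : IsLocalGenerator (cubicBundlePolyK n c K)
      (Ideal.span {fibreCubic n c K j₀, fibreCubic n c K j₁}) (fibreCubic n c K j₀) := by
  refine ⟨Ideal.subset_span (by simp), h.fibreCubic_notMem K,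
    fun a ha => ⟨_, X_inl_notMem_span_pencil K j₀ j₁ j₁, ?_⟩⟩
  obtain ⟨u, v, rfl⟩ := Ideal.mem_span_pair.1 ha
  rw [← Ideal.span_insert, Ideal.mem_span_pair]
  exact ⟨X (Sum.inl j₁) * u - v * X (Sum.inl j₀), v, by
    rw [cubicBundlePolyK_eq_add K h.ne hall]; ring⟩

theorem IsAdapted.isPrimeDivisor_span_pencil (h : IsAdapted c j₀ j₁)
    (hall : ∀ j, j = j₀ ∨ j = j₁) :
    IsPrimeDivisor n c K (Ideal.span {fibreCubic n c K j₀, fibreCubic n c K j₁}) := by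
  refine (h.isLocalGenerator_span_pencil K hall).isPrimeDivisor
    (h.isPrime_span_cubicBundlePolyK K) (h.prime_fibreCubic_pencil n K).2 ?_ ?_
    ⟨j₀, X_inl_notMem_span_pencil K j₀ j₁ j₀⟩ ⟨0, ?_⟩
  · rw [cubicBundlePolyK_eq_add K h.ne hall]
    exact Ideal.mem_span_pair.2 ⟨X (Sum.inl j₀), X (Sum.inl j₁), by ring⟩
  · refine fun f hf d => weightedHomogeneousComponent_mem_span ?_ hf d
    rintro _ (rfl | rfl) <;> exact ⟨_, isWeightedHomogeneous_fibreCubic n c K _⟩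
  · have hε : (DualNumber.eps : DualNumber K) ^ 3 = 0 := by
      rw [pow_succ, pow_two, DualNumber.eps_mul_eps, zero_mul]
    refine notMem_span_of_map_ne_zero (aeval (Sum.elim 0 ![DualNumber.eps, 0, 0, 0]) :
      MvPolynomial (Fin (n + 1) ⊕ Fin 4) K →ₐ[K] DualNumber K).toRingHom ?_ ?_
    · rintro _ (rfl | rfl) <;>
      exact (aeval_fibreCubic n c K _ _ _).trans (by simp [Fin.sum_univ_four, hε])
    · intro h0
      simpa using congrArg TrivSqZeroExt.snd h0

theorem IsAdapted.eq_span_or_eq_span (h : IsAdapted c j₀ j₁) (hall : ∀ j, j = j₀ ∨ j = j₁)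
    {p : Ideal (MvPolynomial (Fin (n + 1) ⊕ Fin 4) K)} (hp : IsPrimeDivisor n c K p)
    (hF : fibreCubic n c K j₀ ∈ p) :
    p = Ideal.span {fibreCubic n c K j₀, X (Sum.inl j₁)} ∨
      p = Ideal.span {fibreCubic n c K j₀, fibreCubic n c K j₁} := by
  have hP := h.isPrime_span_cubicBundlePolyK K
  have hmem := hp.mem
  rw [cubicBundlePolyK_eq_add K h.ne hall, Ideal.add_mem_iff_right _ (p.mul_mem_left _ hF)] at hmem
  refine (hp.prime.mem_or_mem hmem).imp (fun hm => ?_) fun hm => ?_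
  · have hq := h.isPrimeDivisor_span_fibreCubic_X K hall
    refine hp.eq_of_le hP hq.prime hq.mem (Ideal.subset_span (by simp)) (h.fibreCubic_notMem K) ?_
    rw [Ideal.span_le]
    rintro _ (rfl | rfl)
    exacts [hF, hm]
  · have hq := h.isPrimeDivisor_span_pencil K hall
    refine hp.eq_of_le hP hq.prime hq.mem (Ideal.subset_span (by simp)) (h.fibreCubic_notMem K) ?_
    rw [Ideal.span_le]
    rintro _ (rfl | rfl)
    exacts [hF, hm]

theorem IsAdapted.exists_isLocalGenerator (h : IsAdapted c j₀ j₁)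
    {p : Ideal (MvPolynomial (Fin (n + 1) ⊕ Fin 4) K)} (hp : IsPrimeDivisor n c K p) :
    ∃ π, IsLocalGenerator (cubicBundlePolyK n c K) p π := by
  by_cases hF : fibreCubic n c K j₀ ∈ p
  · rcases h.third with hall | ⟨j₂, hj₂, -, h0, h1, h2⟩
    · rcases h.eq_span_or_eq_span K hall hp hF with rfl | rfl
      · exact ⟨_, h.isLocalGenerator_span_fibreCubic_X K hall⟩
      · exact ⟨_, h.isLocalGenerator_span_pencil K hall⟩
    · rw [h.eq_span_pair K hj₂ h0 h1 h2 hp hF]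
      exact ⟨_, h.isLocalGenerator_span_pair K⟩
  · obtain ⟨ϖ, hϖ, rfl⟩ := hp.exists_pivotForm h hF
    exact ⟨ϖ, hϖ.isLocalGenerator h⟩

end Boundary

section FormDivisors

variable {n} {c} {K} {j₀ j₁ : Fin (n + 1)} {f g : MvPolynomial (Fin (n + 1) ⊕ Fin 4) K}

theorem IsAdapted.ordAt_mul (h : IsAdapted c j₀ j₁) (p : PrimeDivisor n c K)
    (hf : f ∉ Ideal.span {cubicBundlePolyK n c K}) (hg : g ∉ Ideal.span {cubicBundlePolyK n c K}) :
    ordAt n c K p (f * g) = ordAt n c K p f + ordAt n c K p g :=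
  have ⟨_, hπ⟩ := h.exists_isLocalGenerator K p.2
  hπ.ordAt_mul (h.isPrime_span_cubicBundlePolyK K) hf hg

theorem IsAdapted.ordAt_eq_zero_iff (h : IsAdapted c j₀ j₁) (p : PrimeDivisor n c K)
    (hf : f ∉ Ideal.span {cubicBundlePolyK n c K}) : ordAt n c K p f = 0 ↔ f ∉ p.1 :=
  have ⟨_, hπ⟩ := h.exists_isLocalGenerator K p.2
  hπ.ordAt_eq_zero_iff (h.isPrime_span_cubicBundlePolyK K) hf

theorem IsAdapted.mul_notMem (h : IsAdapted c j₀ j₁)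
    (hf : f ∉ Ideal.span {cubicBundlePolyK n c K}) (hg : g ∉ Ideal.span {cubicBundlePolyK n c K}) :
    f * g ∉ Ideal.span {cubicBundlePolyK n c K} := fun hfg =>
  ((h.isPrime_span_cubicBundlePolyK K).mem_or_mem hfg).elim hf hg

theorem IsAdapted.one_notMem (h : IsAdapted c j₀ j₁) :
    (1 : MvPolynomial (Fin (n + 1) ⊕ Fin 4) K) ∉ Ideal.span {cubicBundlePolyK n c K} :=
  (Ideal.ne_top_iff_one _).1 (h.isPrime_span_cubicBundlePolyK K).ne_top

theorem IsAdapted.ordAt_one (h : IsAdapted c j₀ j₁) (p : PrimeDivisor n c K) :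
    ordAt n c K p 1 = 0 :=
  (h.ordAt_eq_zero_iff p h.one_notMem).2 ((Ideal.ne_top_iff_one _).1 p.2.prime.ne_top)

theorem IsAdapted.finite_setOf_mem (h : IsAdapted c j₀ j₁)
    (hf : f ∉ Ideal.span {cubicBundlePolyK n c K}) : {p : PrimeDivisor n c K | f ∈ p.1}.Finite := by
  refine Set.Finite.of_injOn (f := Subtype.val) (t := (Ideal.span {f,
    cubicBundlePolyK n c K}).minimalPrimes) (fun p hp => ?_) Subtype.val_injective.injOn
    (Ideal.finite_minimalPrimes_of_isNoetherianRing _ _)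
  refine ⟨⟨p.2.prime, ?_⟩, fun q ⟨hq, hle⟩ hqp => ?_⟩
  · exact Ideal.span_le.2 (by rintro _ (rfl | rfl); exacts [hp, p.2.mem])
  · rw [Ideal.span_le, Set.pair_subset_iff] at hle
    exact (p.2.eq_of_le (h.isPrime_span_cubicBundlePolyK K) hq hle.2 hle.1 hf hqp).le

/-- The divisor of a form. -/
theorem IsAdapted.exists_divisor (h : IsAdapted c j₀ j₁)
    (hf : f ∉ Ideal.span {cubicBundlePolyK n c K}) :
    ∃ D : PrimeDivisor n c K →₀ ℤ, ∀ p, D p = ordAt n c K p f := by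
  refine ⟨Finsupp.ofSupportFinite (fun p => (ordAt n c K p f : ℤ))
    ((h.finite_setOf_mem hf).subset fun p hp => ?_), fun p => rfl⟩
  by_contra hfp
  exact hp (Nat.cast_eq_zero.2 ((h.ordAt_eq_zero_iff p hf).2 hfp))

/-- The group of pairs consisting of the divisor and the bidegree of a quotient of two forms. -/
def IsAdapted.formDivisors (h : IsAdapted c j₀ j₁) (K : Type) [Field K] [CharZero K] :
    AddSubgroup ((PrimeDivisor n c K →₀ ℤ) × (ℤ × ℤ)) where
  carrier := {D | ∃ (f g : MvPolynomial (Fin (n + 1) ⊕ Fin 4) K) (d e : ℕ × ℕ),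
    f.IsWeightedHomogeneous (biWeight n) d ∧ g.IsWeightedHomogeneous (biWeight n) e ∧
    f ∉ Ideal.span {cubicBundlePolyK n c K} ∧ g ∉ Ideal.span {cubicBundlePolyK n c K} ∧
    (∀ p, D.1 p = (ordAt n c K p f : ℤ) - (ordAt n c K p g : ℤ)) ∧
    D.2 = ((d.1 : ℤ) - e.1, (d.2 : ℤ) - e.2)}
  zero_mem' := ⟨1, 1, 0, 0, isWeightedHomogeneous_one _ _, isWeightedHomogeneous_one _ _,
    h.one_notMem, h.one_notMem, by simp, by ext <;> simp⟩
  add_mem' := by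
    rintro D D' ⟨f, g, d, e, hf, hg, hf0, hg0, hD, hd⟩ ⟨f', g', d', e', hf', hg', hf0', hg0', hD',
      hd'⟩
    refine ⟨f * f', g * g', d + d', e + e', hf.mul hf', hg.mul hg', h.mul_notMem hf0 hf0',
      h.mul_notMem hg0 hg0', fun p => ?_, ?_⟩
    · rw [h.ordAt_mul p hf0 hf0', h.ordAt_mul p hg0 hg0', Prod.fst_add, Finsupp.add_apply, hD, hD']
      push_cast
      ring
    · rw [Prod.snd_add, hd, hd']
      ext <;> simp <;> ring
  neg_mem' := by
    rintro D ⟨f, g, d, e, hf, hg, hf0, hg0, hD, hd⟩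
    refine ⟨g, f, e, d, hg, hf, hg0, hf0, fun p => ?_, ?_⟩
    · rw [Prod.fst_neg, Finsupp.neg_apply, hD, neg_sub]
    · rw [Prod.snd_neg, hd]
      ext <;> simp

theorem IsAdapted.mem_formDivisors (h : IsAdapted c j₀ j₁) {d : ℕ × ℕ}
    (hf : f.IsWeightedHomogeneous (biWeight n) d) (hf0 : f ∉ Ideal.span {cubicBundlePolyK n c K})
    {D : PrimeDivisor n c K →₀ ℤ} (hD : ∀ p, D p = ordAt n c K p f) :
    (D, ((d.1 : ℤ), (d.2 : ℤ))) ∈ h.formDivisors K :=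
  ⟨f, 1, d, 0, hf, isWeightedHomogeneous_one _ _, hf0, h.one_notMem,
    fun p => by simp [hD, h.ordAt_one], by simp⟩

theorem IsAdapted.mem_principalDivisors_iff (h : IsAdapted c j₀ j₁)
    {D : PrimeDivisor n c K →₀ ℤ} :
    D ∈ principalDivisors n c K ↔ (D, 0) ∈ h.formDivisors K := by
  constructor
  · intro hD
    have : principalDivisors n c K ≤ (h.formDivisors K).comap (AddMonoidHom.inl _ (ℤ × ℤ)) := by
      refine (AddSubgroup.closure_le _).2 ?_
      rintro D ⟨f, g, d, hf, hg, hf0, hg0, hD⟩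
      exact ⟨f, g, d, d, hf, hg, hf0, hg0, hD, by ext <;> simp⟩
    exact this hD
  · rintro ⟨f, g, d, e, hf, hg, hf0, hg0, hD, hd⟩
    obtain rfl : d = e := by
      simp only [Prod.ext_iff, Prod.fst_zero, Prod.snd_zero] at hd
      ext <;> lia
    exact AddSubgroup.subset_closure ⟨f, g, d, hf, hg, hf0, hg0, hD⟩

theorem IsAdapted.exists_mem_formDivisors_snd (h : IsAdapted c j₀ j₁) (δ : ℤ × ℤ) :
    ∃ D, (D, δ) ∈ h.formDivisors K := by
  obtain ⟨D, hD⟩ := h.exists_divisor (h.X_inl_notMem K h.ne)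
  obtain ⟨E, hE⟩ := h.exists_divisor (h.X_inr_notMem K 0)
  have hD' := h.mem_formDivisors (isWeightedHomogeneous_X_inl n K j₁) (h.X_inl_notMem K h.ne) hD
  have hE' := h.mem_formDivisors (isWeightedHomogeneous_X_inr n K 0) (h.X_inr_notMem K 0) hE
  refine ⟨δ.1 • D + δ.2 • E, ?_⟩
  simpa using add_mem (zsmul_mem hD' δ.1) (zsmul_mem hE' δ.2)

theorem mem_of_forall_single_mem {ι : Type*} {H : AddSubgroup (ι →₀ ℤ)} {D : ι →₀ ℤ}
    (hD : ∀ i, D i ≠ 0 → Finsupp.single i 1 ∈ H) : D ∈ H := by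
  rw [← Finsupp.sum_single D]
  refine sum_mem fun i hi => ?_
  simpa using zsmul_mem (hD i (Finsupp.mem_support_iff.1 hi)) (D i)

/-- A prime divisor is equivalent to a combination of the other components of the divisor of a
form vanishing on it to first order. -/
theorem IsAdapted.single_mem_of_ordAt_eq_one (h : IsAdapted c j₀ j₁) {d : ℕ × ℕ}
    (hf : f.IsWeightedHomogeneous (biWeight n) d) (hf0 : f ∉ Ideal.span {cubicBundlePolyK n c K})
    {p : PrimeDivisor n c K} (hp : ordAt n c K p f = 1)
    (H : ∀ q : PrimeDivisor n c K, q ≠ p → f ∈ q.1 →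
      Finsupp.single q 1 ∈ (h.formDivisors K).map (AddMonoidHom.fst _ _)) :
    Finsupp.single p 1 ∈ (h.formDivisors K).map (AddMonoidHom.fst _ _) := by
  classical
  obtain ⟨D, hD⟩ := h.exists_divisor hf0
  have hDm : D ∈ (h.formDivisors K).map (AddMonoidHom.fst _ _) :=
    ⟨_, h.mem_formDivisors hf hf0 hD, rfl⟩
  have : D - Finsupp.single p 1 ∈ (h.formDivisors K).map (AddMonoidHom.fst _ _) := by
    refine mem_of_forall_single_mem fun q hq => ?_
    rw [Finsupp.sub_apply, hD] at hq
    obtain rfl | hqp := eq_or_ne q p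
    · simp [hp] at hq
    · refine H q hqp ?_
      by_contra hfq
      rw [(h.ordAt_eq_zero_iff q hf0).2 hfq, Finsupp.single_eq_of_ne hqp] at hq
      simp at hq
  simpa using sub_mem hDm this

theorem IsAdapted.single_mem_of_fibreCubic_mem (h : IsAdapted c j₀ j₁) (p : PrimeDivisor n c K)
    (hp : fibreCubic n c K j₀ ∈ p.1) :
    Finsupp.single p 1 ∈ (h.formDivisors K).map (AddMonoidHom.fst _ _) := by
  have hP := h.isPrime_span_cubicBundlePolyK K
  have hF := isWeightedHomogeneous_fibreCubic n c K j₀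
  rcases h.third with hall | ⟨j₂, hj₂, -, h0, h1, h2⟩
  · have hline : ∀ q : PrimeDivisor n c K,
        q.1 = Ideal.span {fibreCubic n c K j₀, X (Sum.inl j₁)} →
        Finsupp.single q 1 ∈ (h.formDivisors K).map (AddMonoidHom.fst _ _) := by
      intro q hq
      have hgen := h.isLocalGenerator_span_fibreCubic_X K hall
      rw [← hq] at hgen
      refine h.single_mem_of_ordAt_eq_one (isWeightedHomogeneous_X_inl n K j₁)
        (h.X_inl_notMem K h.ne) (hgen.ordAt_self hP) fun r hr hXr => absurd ?_ hr
      have hX : X (Sum.inl j₀) ∉ r.1 := fun hX => by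
        obtain ⟨j, hj⟩ := r.2.relevant_x
        rcases hall j with rfl | rfl
        exacts [hj hX, hj hXr]
      have hFr : fibreCubic n c K j₀ ∈ r.1 := by
        refine (r.2.prime.mem_or_mem ?_).resolve_left hX
        have := r.2.mem
        rwa [cubicBundlePolyK_eq_add K h.ne hall,
          Ideal.add_mem_iff_left _ (Ideal.mul_mem_right _ _ hXr)] at this
      refine Subtype.ext ((r.2.eq_of_le hP q.2.prime q.2.mem hgen.mem hgen.notMem ?_))
      rw [hq, Ideal.span_le, Set.pair_subset_iff]
      exact ⟨hFr, hXr⟩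
    rcases h.eq_span_or_eq_span K hall p.2 hp with hq | hq
    · exact hline p hq
    · have hgen := h.isLocalGenerator_span_pencil K hall
      rw [← hq] at hgen
      refine h.single_mem_of_ordAt_eq_one hF (h.fibreCubic_notMem K) (hgen.ordAt_self hP)
        fun r hr hFr => hline r ?_
      exact (h.eq_span_or_eq_span K hall r.2 hFr).resolve_right
        fun hr' => hr (Subtype.ext (hr'.trans hq.symm))
  · have hgen := h.isLocalGenerator_span_pair K
    have hq := h.eq_span_pair K hj₂ h0 h1 h2 p.2 hp
    rw [← hq] at hgen
    exact h.single_mem_of_ordAt_eq_one hF (h.fibreCubic_notMem K) (hgen.ordAt_self hP)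
      fun r hr hFr => absurd
        (Subtype.ext ((h.eq_span_pair K hj₂ h0 h1 h2 r.2 hFr).trans hq.symm)) hr

theorem IsAdapted.exists_mem_formDivisors_fst (h : IsAdapted c j₀ j₁)
    (D : PrimeDivisor n c K →₀ ℤ) : ∃ δ, (D, δ) ∈ h.formDivisors K := by
  suffices D ∈ (h.formDivisors K).map (AddMonoidHom.fst _ _) by
    obtain ⟨⟨_, δ⟩, hδ, rfl⟩ := this
    exact ⟨δ, hδ⟩
  refine mem_of_forall_single_mem fun p _ => ?_
  by_cases hp : fibreCubic n c K j₀ ∈ p.1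
  · exact h.single_mem_of_fibreCubic_mem p hp
  obtain ⟨ϖ, hϖ, hpϖ⟩ := p.2.exists_pivotForm h hp
  have hgen := hϖ.isLocalGenerator h
  rw [← hpϖ] at hgen
  obtain ⟨d, hd⟩ := hϖ.homogeneous
  refine h.single_mem_of_ordAt_eq_one hd hgen.notMem
    (hgen.ordAt_self (h.isPrime_span_cubicBundlePolyK K)) fun q hqp hq => ?_
  by_cases hFq : fibreCubic n c K j₀ ∈ q.1
  · exact h.single_mem_of_fibreCubic_mem q hFq
  obtain ⟨ϖ', hϖ', hqϖ⟩ := q.2.exists_pivotForm h hFq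
  rw [hqϖ, mem_pivotDivisor_of_mem_supported hϖ' hd hϖ.supported] at hq
  refine absurd (Subtype.ext ?_) hqp
  rw [hqϖ, hpϖ]
  ext f
  rw [mem_pivotDivisor, mem_pivotDivisor,
    (hϖ'.prime.associated_of_dvd hϖ.prime hq).dvd_iff_dvd_left]

end FormDivisors

section PicardGroup

variable {n} {c} {K} {j₀ j₁ : Fin (n + 1)} {f g : MvPolynomial (Fin (n + 1) ⊕ Fin 4) K}

theorem IsAdapted.dvd_fibreCubic_or_dvd_X (h : IsAdapted c j₀ j₁)
    {ϖ : MvPolynomial (Fin (n + 1) ⊕ Fin 4) K} (hϖ : Prime ϖ)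
    (hhom : ∃ d, ϖ.IsWeightedHomogeneous (biWeight n) d)
    (hsupp : ϖ ∈ supported K {Sum.inl j₀}ᶜ) (hpiv : ¬ IsPivotForm c j₀ ϖ) :
    ϖ ∣ fibreCubic n c K j₀ ∨ (∀ j, j = j₀ ∨ j = j₁) ∧ ϖ ∣ X (Sum.inl j₁) := by
  by_contra! hcon
  have hX : ∀ j, j ≠ j₀ → ϖ ∣ X (Sum.inl j) := fun j hj => by
    by_contra hd
    exact hpiv ⟨hϖ, hhom, hsupp, hcon.1, j, hj, hd⟩
  rcases h.third with hall | ⟨j₂, hj₂, hj₂₁, -⟩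
  · exact hcon.2 hall (hX j₁ h.ne)
  · exact X_not_dvd_X (Sum.inl_injective.ne hj₂₁) hϖ (hX j₂ hj₂) (hX j₁ h.ne)

theorem IsAdapted.exists_fibreCubic_mem (h : IsAdapted c j₀ j₁) :
    ∃ q : PrimeDivisor n c K, fibreCubic n c K j₀ ∈ q.1 ∧
      ((∀ j, j = j₀ ∨ j = j₁) → X (Sum.inl j₁) ∉ q.1) := by
  rcases h.third with hall | ⟨j₂, hj₂, hj₂₁, h0, h1, h2⟩
  · exact ⟨⟨_, h.isPrimeDivisor_span_pencil K hall⟩, Ideal.subset_span (by simp),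
      fun _ => X_inl_notMem_span_pencil K j₀ j₁ j₁⟩
  · refine ⟨⟨_, h.isPrimeDivisor_span_pair K hj₂ h0 h1 h2⟩, Ideal.subset_span (by simp),
      fun hall => ?_⟩
    rcases hall j₂ with rfl | rfl
    exacts [absurd rfl hj₂, absurd rfl hj₂₁]

/-- Coprime forms vanishing on the same prime divisors are constant. -/
theorem IsAdapted.isUnit_of_forall_mem_iff (h : IsAdapted c j₀ j₁)
    (hf0 : f ≠ 0) (hg0 : g ≠ 0) {d e : ℕ × ℕ}
    (hf : f.IsWeightedHomogeneous (biWeight n) d) (hg : g.IsWeightedHomogeneous (biWeight n) e)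
    (hfs : f ∈ supported K {Sum.inl j₀}ᶜ) (hgs : g ∈ supported K {Sum.inl j₀}ᶜ)
    (hrel : IsRelPrime f g) (hfg : ∀ p : PrimeDivisor n c K, f ∈ p.1 ↔ g ∈ p.1) :
    IsUnit f := by
  have hdvd : ∀ {u v : MvPolynomial (Fin (n + 1) ⊕ Fin 4) K} {a b : ℕ × ℕ}, u ≠ 0 →
      u.IsWeightedHomogeneous (biWeight n) a → u ∈ supported K {Sum.inl j₀}ᶜ →
      v.IsWeightedHomogeneous (biWeight n) b → v ∈ supported K {Sum.inl j₀}ᶜ →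
      IsRelPrime u v → (∀ p : PrimeDivisor n c K, u ∈ p.1 ↔ v ∈ p.1) →
      ∀ ϖ, Prime ϖ → ϖ ∣ u →
        ϖ ∣ fibreCubic n c K j₀ ∨ (∀ j, j = j₀ ∨ j = j₁) ∧ ϖ ∣ X (Sum.inl j₁) := by
    intro u v a b hu0 hu hus hv hvs huv huv' ϖ hϖ hϖu
    have hhom : ∃ d, ϖ.IsWeightedHomogeneous (biWeight n) d := by
      obtain ⟨t, rfl⟩ := hϖu
      exact exists_isWeightedHomogeneous_biWeight_of_mul hu hu0
    refine h.dvd_fibreCubic_or_dvd_X hϖ hhom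
      (mem_supported_compl_singleton_of_dvd hus hu0 hϖu) fun hpiv => hϖ.not_isUnit ?_
    refine huv hϖu ?_
    have := huv' ⟨_, hpiv.isPrimeDivisor h⟩
    rw [mem_pivotDivisor_of_mem_supported hpiv hu hus,
      mem_pivotDivisor_of_mem_supported hpiv hv hvs] at this
    exact this.1 hϖu
  have hf' := hdvd hf0 hf hfs hg hgs hrel hfg
  have hg' := hdvd hg0 hg hgs hf hfs hrel.symm fun p => (hfg p).symm
  have hF := h.prime_fibreCubic K
  have hF_not : ∀ {u v : MvPolynomial (Fin (n + 1) ⊕ Fin 4) K}, v ≠ 0 → IsRelPrime u v →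
      (∀ p : PrimeDivisor n c K, u ∈ p.1 → v ∈ p.1) →
      (∀ ϖ, Prime ϖ → ϖ ∣ v →
        ϖ ∣ fibreCubic n c K j₀ ∨ (∀ j, j = j₀ ∨ j = j₁) ∧ ϖ ∣ X (Sum.inl j₁)) →
      ¬ fibreCubic n c K j₀ ∣ u := by
    intro u v hv0 huv huv' hv hFu
    obtain ⟨q, hFq, hXq⟩ := h.exists_fibreCubic_mem (K := K)
    have hvq : v ∈ q.1 := huv' q (Ideal.mem_of_dvd _ hFu hFq)
    obtain ⟨s, hs, hsv⟩ := UniqueFactorizationMonoid.exists_prime_factors v hv0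
    obtain ⟨ϖ, hϖs, hϖq⟩ := (q.2.prime.multiset_prod_mem_iff_exists_mem s).1
      (Ideal.mem_of_dvd _ hsv.symm.dvd hvq)
    have hϖv : ϖ ∣ v := (Multiset.dvd_prod hϖs).trans hsv.dvd
    rcases hv ϖ (hs ϖ hϖs) hϖv with hϖF | ⟨hall, hϖX⟩
    · exact (hs ϖ hϖs).not_isUnit (huv (hϖF.trans hFu) hϖv)
    · exact hXq hall (Ideal.mem_of_dvd _ hϖX hϖq)
  have hFf := hF_not hg0 hrel (fun p => (hfg p).1) hg'
  have hFg := hF_not hf0 hrel.symm (fun p => (hfg p).2) hf'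
  by_contra hfu
  obtain ⟨ϖ, hϖ, hϖf⟩ := WfDvdMonoid.exists_irreducible_factor hfu hf0
  replace hϖ := hϖ.prime
  rcases hf' ϖ hϖ hϖf with hϖF | ⟨hall, hϖX⟩
  · exact hFf ((hϖ.associated_of_dvd hF hϖF).symm.dvd.trans hϖf)
  have hXf : X (Sum.inl j₁) ∣ f :=
    (hϖ.associated_of_dvd X_prime hϖX).symm.dvd.trans hϖf
  let q : PrimeDivisor n c K := ⟨_, h.isPrimeDivisor_span_fibreCubic_X K hall⟩
  have hgq : g ∈ q.1 := (hfg q).1 (Ideal.mem_of_dvd _ hXf (Ideal.subset_span (by simp)))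
  have hgu : ¬ IsUnit g := fun hgu => q.2.prime.ne_top (Ideal.eq_top_of_isUnit_mem _ hgq hgu)
  obtain ⟨ϖ', hϖ', hϖg⟩ := WfDvdMonoid.exists_irreducible_factor hgu hg0
  replace hϖ' := hϖ'.prime
  rcases hg' ϖ' hϖ' hϖg with hϖF | ⟨-, hϖX'⟩
  · exact hFg ((hϖ'.associated_of_dvd hF hϖF).symm.dvd.trans hϖg)
  · exact hϖ'.not_isUnit (hrel (hϖX'.trans hXf) hϖg)

theorem isWeightedHomogeneous_eq_zero_of_isUnit {σ R M : Type*} [CommRing R] [IsDomain R]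
    [AddCommMonoid M] {w : σ → M} {f : MvPolynomial σ R} {d : M}
    (hf : f.IsWeightedHomogeneous w d) (hfu : IsUnit f) : d = 0 := by
  obtain ⟨r, hr, rfl⟩ := MvPolynomial.isUnit_iff_eq_C_of_isReduced.1 hfu
  exact IsWeightedHomogeneous.inj_right (C_ne_zero.2 hr.ne_zero) hf (isWeightedHomogeneous_C w r)

theorem IsAdapted.degree_eq_of_mem_supported (h : IsAdapted c j₀ j₁)
    (hf0 : f ≠ 0) (hg0 : g ≠ 0) {d e : ℕ × ℕ}
    (hf : f.IsWeightedHomogeneous (biWeight n) d) (hg : g.IsWeightedHomogeneous (biWeight n) e)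
    (hfs : f ∈ supported K {Sum.inl j₀}ᶜ) (hgs : g ∈ supported K {Sum.inl j₀}ᶜ)
    (hfg : ∀ p, ordAt n c K p f = ordAt n c K p g) : d = e := by
  obtain ⟨f', g', k, hrel, rfl, rfl⟩ := UniqueFactorizationMonoid.exists_reduced_factors' f g hg0
  obtain ⟨dk, hk⟩ := exists_isWeightedHomogeneous_biWeight_of_mul hf hf0
  obtain ⟨d', hf'⟩ := exists_isWeightedHomogeneous_biWeight_of_mul
    (mul_comm k f' ▸ hf) (mul_comm k f' ▸ hf0)
  obtain ⟨e', hg'⟩ := exists_isWeightedHomogeneous_biWeight_of_mul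
    (mul_comm k g' ▸ hg) (mul_comm k g' ▸ hg0)
  have hks := mem_supported_compl_singleton_of_dvd hfs hf0 (Dvd.intro _ rfl)
  have hfs' := mem_supported_compl_singleton_of_dvd hfs hf0 (Dvd.intro_left _ rfl)
  have hgs' := mem_supported_compl_singleton_of_dvd hgs hg0 (Dvd.intro_left _ rfl)
  have hk0 := left_ne_zero_of_mul hf0
  have hf0' := right_ne_zero_of_mul hf0
  have hg0' := right_ne_zero_of_mul hg0
  have hkP := h.notMem_span_of_mem_supported K hk hks hk0
  have hfP := h.notMem_span_of_mem_supported K hf' hfs' hf0'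
  have hgP := h.notMem_span_of_mem_supported K hg' hgs' hg0'
  have hmem : ∀ p : PrimeDivisor n c K, f' ∈ p.1 ↔ g' ∈ p.1 := fun p => by
    have := hfg p
    rw [h.ordAt_mul p hkP hfP, h.ordAt_mul p hkP hgP, add_right_inj] at this
    rw [← not_iff_not, ← h.ordAt_eq_zero_iff p hfP, ← h.ordAt_eq_zero_iff p hgP, this]
  have hfu := h.isUnit_of_forall_mem_iff hf0' hg0' hf' hg' hfs' hgs' hrel hmem
  have hgu := h.isUnit_of_forall_mem_iff hg0' hf0' hg' hf' hgs' hfs' hrel.symm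
    fun p => (hmem p).symm
  rw [IsWeightedHomogeneous.inj_right hf0 hf (hk.mul hf'),
    IsWeightedHomogeneous.inj_right hg0 hg (hk.mul hg'),
    isWeightedHomogeneous_eq_zero_of_isUnit hf' hfu,
    isWeightedHomogeneous_eq_zero_of_isUnit hg' hgu]

/-- Forms with the same divisor have the same bidegree. -/
theorem IsAdapted.degree_eq (h : IsAdapted c j₀ j₁)
    (hf0 : f ∉ Ideal.span {cubicBundlePolyK n c K}) (hg0 : g ∉ Ideal.span {cubicBundlePolyK n c K})
    {d e : ℕ × ℕ} (hf : f.IsWeightedHomogeneous (biWeight n) d)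
    (hg : g.IsWeightedHomogeneous (biWeight n) e)
    (hfg : ∀ p, ordAt n c K p f = ordAt n c K p g) : d = e := by
  have hP := h.isPrime_span_cubicBundlePolyK K
  have hF := isWeightedHomogeneous_fibreCubic n c K j₀
  have hF0 := (h.prime_fibreCubic K).ne_zero
  have hhom : ∀ {f : MvPolynomial (Fin (n + 1) ⊕ Fin 4) K} {d : ℕ × ℕ},
      f.IsWeightedHomogeneous (biWeight n) d →
      (eliminate j₀ (fibreCubic n c K j₀) (cubicBundlePolyK n c K) f).IsWeightedHomogeneous
        (biWeight n) (eliminateDegree 3 d) :=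
    fun hf => hf.map_algHom _ _ (isWeightedHomogeneous_eliminate_X j₀ hF
      (isWeightedHomogeneous_cubicBundlePolyK n c K))
  have hord : ∀ {f : MvPolynomial (Fin (n + 1) ⊕ Fin 4) K} {d : ℕ × ℕ} (k : ℕ) (p),
      f ∉ Ideal.span {cubicBundlePolyK n c K} → f.IsWeightedHomogeneous (biWeight n) d →
      ordAt n c K p (eliminate j₀ (fibreCubic n c K j₀) (cubicBundlePolyK n c K) f *
        fibreCubic n c K j₀ ^ k) =
      ordAt n c K p (fibreCubic n c K j₀ ^ (d.1 + k)) + ordAt n c K p f := by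
    intro f d k p hf0 hf
    rw [← h.ordAt_mul p (fun hm => h.fibreCubic_notMem K (hP.mem_of_pow_mem _ hm)) hf0]
    refine ordAt_congr p ?_
    convert Ideal.mul_mem_right (fibreCubic n c K j₀ ^ k) _
      (eliminate_sub_mem j₀ (fibreCubic n c K j₀) (cubicBundlePolyK n c K) hf) using 1
    ring
  have hsupp : ∀ (f : MvPolynomial (Fin (n + 1) ⊕ Fin 4) K) (k : ℕ),
      eliminate j₀ (fibreCubic n c K j₀) (cubicBundlePolyK n c K) f * fibreCubic n c K j₀ ^ k ∈
        supported K {Sum.inl j₀}ᶜ := fun f k =>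
    mul_mem (eliminate_mem_supported n c K j₀ f) (pow_mem (fibreCubic_mem_supported n c K j₀ j₀) k)
  have key := h.degree_eq_of_mem_supported
    (mul_ne_zero ((h.eliminate_eq_zero_iff K).not.2 hf0) (pow_ne_zero e.1 hF0))
    (mul_ne_zero ((h.eliminate_eq_zero_iff K).not.2 hg0) (pow_ne_zero d.1 hF0))
    ((hhom hf).mul (hF.pow e.1)) ((hhom hg).mul (hF.pow d.1)) (hsupp f _) (hsupp g _)
    fun p => by rw [hord e.1 p hf0 hf, hord d.1 p hg0 hg, hfg p, add_comm d.1]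
  simp only [eliminateDegree, AddMonoidHom.coe_mk, ZeroHom.coe_mk, Prod.ext_iff, Prod.fst_add,
    Prod.snd_add, Prod.smul_fst, Prod.smul_snd, smul_eq_mul] at key
  ext <;> lia

theorem nonempty_quotient_addEquiv {A B : Type*} [AddCommGroup A] [AddCommGroup B]
    (Γ : AddSubgroup (A × B)) (N : AddSubgroup A) (hN : ∀ a, a ∈ N ↔ (a, 0) ∈ Γ)
    (hfst : ∀ a, ∃ b, (a, b) ∈ Γ) (hsnd : ∀ b, ∃ a, (a, b) ∈ Γ)
    (hinj : ∀ b, (0, b) ∈ Γ → b = 0) : Nonempty (A ⧸ N ≃+ B) := by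
  choose φ hφ using hfst
  have huniq : ∀ {a b b'}, (a, b) ∈ Γ → (a, b') ∈ Γ → b = b' := fun h h' =>
    sub_eq_zero.1 (hinj _ (by simpa using sub_mem h h'))
  let Φ : A →+ B := AddMonoidHom.mk' φ fun a a' =>
    huniq (hφ _) (by simpa using add_mem (hφ a) (hφ a'))
  have hker : N = Φ.ker := by
    ext a
    rw [hN, AddMonoidHom.mem_ker]
    exact ⟨fun ha => huniq (hφ a) ha, fun ha => ha ▸ hφ a⟩
  subst hker
  exact ⟨QuotientAddGroup.quotientKerEquivOfSurjective Φ fun b =>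
    (hsnd b).imp fun a ha => huniq (hφ a) ha⟩

theorem IsAdapted.nonempty_picX_addEquiv (h : IsAdapted c j₀ j₁) (K : Type) [Field K]
    [CharZero K] : Nonempty (PicX n c K ≃+ ℤ × ℤ) := by
  refine nonempty_quotient_addEquiv (h.formDivisors K) (principalDivisors n c K)
    (fun D => h.mem_principalDivisors_iff) h.exists_mem_formDivisors_fst
    h.exists_mem_formDivisors_snd ?_
  rintro δ ⟨f, g, d, e, hf, hg, hf0, hg0, hD, hδ⟩
  obtain rfl := h.degree_eq hf0 hg0 hf hg fun p => by
    have := hD p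
    simp only [Finsupp.coe_zero, Pi.zero_apply] at this
    lia
  exact hδ.trans (by ext <;> simp)

end PicardGroup

section CoordinateChange

variable {n}

/-- The linear substitution `x_k ↦ ∑ⱼ M_{kj} x_j`. -/
def linearSubst (M : Matrix (Fin (n + 1)) (Fin (n + 1)) ℚ) :
    MvPolynomial (Fin (n + 1) ⊕ Fin 4) K →ₐ[K] MvPolynomial (Fin (n + 1) ⊕ Fin 4) K :=
  aeval (Sum.elim (fun k => ∑ j, C (algebraMap ℚ K (M k j)) * X (Sum.inl j))
    fun i => X (Sum.inr i))

variable (M N : Matrix (Fin (n + 1)) (Fin (n + 1)) ℚ)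

theorem linearSubst_X_inl (k : Fin (n + 1)) :
    linearSubst K M (X (Sum.inl k)) = ∑ j, C (algebraMap ℚ K (M k j)) * X (Sum.inl j) := by
  simp [linearSubst]

theorem linearSubst_X_inr (i : Fin 4) : linearSubst K M (X (Sum.inr i)) = X (Sum.inr i) := by
  simp [linearSubst]

theorem linearSubst_sum (v : Fin (n + 1) → ℚ) :
    linearSubst K M (∑ k, C (algebraMap ℚ K (v k)) * X (Sum.inl k)) =
      ∑ j, C (algebraMap ℚ K (∑ k, v k * M k j)) * X (Sum.inl j) := by
  simp only [map_sum, map_mul, linearSubst_X_inl, Finset.mul_sum, Finset.sum_mul, algHom_C]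
  rw [Finset.sum_comm]
  simp [mul_assoc, algebraMap_eq]

theorem linearSubst_linearSubst_of_mul_eq_one (h : M * N = 1)
    (f : MvPolynomial (Fin (n + 1) ⊕ Fin 4) K) :
    linearSubst K N (linearSubst K M f) = f := by
  suffices (linearSubst K N).comp (linearSubst K M) = AlgHom.id K _ from DFunLike.congr_fun this f
  ext i : 1
  rcases i with k | i
  · rw [AlgHom.comp_apply, linearSubst_X_inl, linearSubst_sum]
    simp only [← Matrix.mul_apply, h, Matrix.one_apply]
    simp
  · simp [linearSubst_X_inr]

theorem linearSubst_cubicBundlePolyK :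
    linearSubst K M (cubicBundlePolyK n c K) =
      cubicBundlePolyK n (fun i j => ∑ k, c i k * M k j) K := by
  simp only [cubicBundlePolyK, map_sum (linearSubst K M) (fun i => _ * X (Sum.inr i) ^ 3), map_mul,
    map_pow, linearSubst_sum, linearSubst_X_inr]

theorem isWeightedHomogeneous_linearSubst_X (i : Fin (n + 1) ⊕ Fin 4) :
    (linearSubst K M (X i)).IsWeightedHomogeneous (biWeight n) (biWeight n i) := by
  rcases i with k | i
  · rw [linearSubst_X_inl]
    refine IsWeightedHomogeneous.sum _ _ _ fun j _ => ?_
    exact (isWeightedHomogeneous_X_inl n K j).C_mul _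
  · rw [linearSubst_X_inr]
    exact isWeightedHomogeneous_X_inr n K i

theorem MvPolynomial.IsWeightedHomogeneous.map_linearSubst
    {f : MvPolynomial (Fin (n + 1) ⊕ Fin 4) K} {d : ℕ × ℕ}
    (hf : f.IsWeightedHomogeneous (biWeight n) d) :
    (linearSubst K M f).IsWeightedHomogeneous (biWeight n) d :=
  hf.map_algHom (AddMonoidHom.id _) _ (isWeightedHomogeneous_linearSubst_X K M)

variable {K M N}

/-- An invertible linear substitution as an automorphism of the coordinate ring. -/
def linearSubstEquiv (hMN : M * N = 1) (hNM : N * M = 1) :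
    MvPolynomial (Fin (n + 1) ⊕ Fin 4) K ≃+* MvPolynomial (Fin (n + 1) ⊕ Fin 4) K :=
  RingEquiv.ofRingHom (linearSubst K M : _ →+* _) (linearSubst K N : _ →+* _)
    (RingHom.ext fun f => linearSubst_linearSubst_of_mul_eq_one K N M hNM f)
    (RingHom.ext fun f => linearSubst_linearSubst_of_mul_eq_one K M N hMN f)

variable {c} {c' : Fin 4 → Fin (n + 1) → ℚ}

theorem IsPrimeDivisor.comap_linearSubstEquiv
    {p : Ideal (MvPolynomial (Fin (n + 1) ⊕ Fin 4) K)} (hp : IsPrimeDivisor n c' K p)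
    (hMN : M * N = 1) (hNM : N * M = 1)
    (hc : linearSubst K M (cubicBundlePolyK n c K) = cubicBundlePolyK n c' K) :
    IsPrimeDivisor n c K (p.comap (linearSubstEquiv hMN hNM)) := by
  let e := linearSubstEquiv (K := K) hMN hNM
  have he : ∀ f, e f = linearSubst K M f := fun f => rfl
  have hes : ∀ f, e.symm f = linearSubst K N f := fun f => rfl
  let E := e.idealComapOrderIso
  have hE : ∀ I, E I = I.comap e := fun I => rfl
  have hEs : ∀ I, E.symm I = I.comap e.symm := fun I => by
    rw [OrderIso.symm_apply_eq, hE]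
    ext f
    simp [Ideal.mem_comap]
  have hprime : ∀ I : Ideal _, I.IsPrime → (E.symm I).IsPrime := fun I hI => by
    rw [hEs]
    exact Ideal.comap_isPrime _ _
  have hmem : ∀ I : Ideal _, cubicBundlePolyK n c K ∈ I → cubicBundlePolyK n c' K ∈ E.symm I :=
    fun I hI => by
      rw [hEs, Ideal.mem_comap, ← hc, ← he, e.symm_apply_apply]
      exact hI
  refine ⟨hp.prime.comap _, fun f hf d => ?_, ?_, ?_, ?_, ?_, ?_⟩
  · rw [Ideal.mem_comap] at hf ⊢
    have := weightedHomogeneousComponent_map_algHom (AddMonoidHom.id _) Function.injective_id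
      (linearSubst K M) (isWeightedHomogeneous_linearSubst_X K M) f d
    exact this ▸ hp.bihom _ hf d
  · by_contra! hX
    obtain ⟨k, hk⟩ := hp.relevant_x
    have : e.symm (X (Sum.inl k)) ∈ p.comap e := by
      rw [hes, linearSubst_X_inl]
      exact sum_mem fun j _ => Ideal.mul_mem_left _ _ (hX j)
    rw [Ideal.mem_comap, e.apply_symm_apply] at this
    exact hk this
  · obtain ⟨i, hi⟩ := hp.relevant_y
    refine ⟨i, ?_⟩
    rwa [Ideal.mem_comap, he, linearSubst_X_inr]
  · rw [Ideal.mem_comap, he, hc]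
    exact hp.mem
  · obtain ⟨q, hq, hPq, hqp⟩ := hp.exists_lt
    refine ⟨E q, hq.comap _, ?_, E.lt_iff_lt.2 hqp⟩
    rwa [hE, Ideal.mem_comap, he, hc]
  · intro q hq hPq hqp r hr hPr hrq
    exact E.symm.injective (hp.height_one (E.symm q) (hprime q hq) (hmem q hPq)
      ((E.symm_apply_lt).2 hqp) (E.symm r) (hprime r hr) (hmem r hPr) (E.symm.monotone hrq))

theorem linearSubst_symm_cubicBundlePolyK (hMN : M * N = 1)
    (hc : linearSubst K M (cubicBundlePolyK n c K) = cubicBundlePolyK n c' K) :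
    linearSubst K N (cubicBundlePolyK n c' K) = cubicBundlePolyK n c K := by
  rw [← hc, linearSubst_linearSubst_of_mul_eq_one K M N hMN]

/-- An invertible linear substitution permutes the prime divisors. -/
def primeDivisorEquiv (hMN : M * N = 1) (hNM : N * M = 1)
    (hc : linearSubst K M (cubicBundlePolyK n c K) = cubicBundlePolyK n c' K) :
    PrimeDivisor n c' K ≃ PrimeDivisor n c K where
  toFun p := ⟨_, p.2.comap_linearSubstEquiv hMN hNM hc⟩
  invFun p := ⟨_, p.2.comap_linearSubstEquiv hNM hMN (linearSubst_symm_cubicBundlePolyK hMN hc)⟩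
  left_inv p := Subtype.ext <| by
    ext f
    exact iff_of_eq (congrArg (· ∈ p.1) (linearSubst_linearSubst_of_mul_eq_one K N M hNM f))
  right_inv p := Subtype.ext <| by
    ext f
    exact iff_of_eq (congrArg (· ∈ p.1) (linearSubst_linearSubst_of_mul_eq_one K M N hMN f))

theorem ordAt_primeDivisorEquiv (hMN : M * N = 1) (hNM : N * M = 1)
    (hc : linearSubst K M (cubicBundlePolyK n c K) = cubicBundlePolyK n c' K)
    (p : PrimeDivisor n c' K)
    (f : MvPolynomial (Fin (n + 1) ⊕ Fin 4) K) :
    ordAt n c K (primeDivisorEquiv hMN hNM hc p) f = ordAt n c' K p (linearSubst K M f) := by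
  let e := linearSubstEquiv (K := K) hMN hNM
  have he : ∀ f, e f = linearSubst K M f := fun f => rfl
  have hP : e.symm (cubicBundlePolyK n c' K) = cubicBundlePolyK n c K :=
    linearSubst_symm_cubicBundlePolyK hMN hc
  have hp : (primeDivisorEquiv hMN hNM hc p).1 = p.1.comap e := rfl
  have hpow : ∀ m : ℕ, p.1.comap e ^ m ⊔ Ideal.span {cubicBundlePolyK n c K} =
      (p.1 ^ m ⊔ Ideal.span {cubicBundlePolyK n c' K}).comap e := fun m => by
    rw [← e.symm_symm, ← Ideal.map_comap_of_equiv, ← Ideal.map_comap_of_equiv, Ideal.map_sup,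
      Ideal.map_pow, Ideal.map_span, Set.image_singleton]
    simp [hP]
  unfold ordAt
  congr 1
  ext m
  simp only [Set.mem_ofPred_eq]
  rw [hp, hpow m]
  simp only [Ideal.mem_comap, map_mul, ← he f]
  exact (e.surjective.exists (p := fun s => s ∉ p.1 ∧ s * e f ∈ _)).symm

theorem map_principalDivisors (hMN : M * N = 1) (hNM : N * M = 1)
    (hc : linearSubst K M (cubicBundlePolyK n c K) = cubicBundlePolyK n c' K) :
    (principalDivisors n c' K).map
      (Finsupp.domCongr (M := ℤ) (primeDivisorEquiv hMN hNM hc)).toAddMonoidHom =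
      principalDivisors n c K := by
  have happ : ∀ (D : PrimeDivisor n c' K →₀ ℤ) (p : PrimeDivisor n c' K),
      Finsupp.domCongr (primeDivisorEquiv hMN hNM hc) D (primeDivisorEquiv hMN hNM hc p) = D p :=
    fun D p => by simp [Finsupp.domCongr]
  have hmem : ∀ f, f ∈ Ideal.span {cubicBundlePolyK n c K} ↔
      linearSubst K M f ∈ Ideal.span {cubicBundlePolyK n c' K} := fun f => by
    rw [Ideal.mem_span_singleton, Ideal.mem_span_singleton, ← hc]
    exact (map_dvd_iff (linearSubstEquiv (K := K) hMN hNM)).symm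
  rw [principalDivisors, AddMonoidHom.map_closure]
  congr 1
  ext D
  constructor
  · rintro ⟨D, ⟨f, g, d, hf, hg, hf0, hg0, hD⟩, rfl⟩
    refine ⟨linearSubst K N f, linearSubst K N g, d, hf.map_linearSubst K N,
      hg.map_linearSubst K N, ?_, ?_, fun p => ?_⟩
    · rwa [hmem, linearSubst_linearSubst_of_mul_eq_one K N M hNM]
    · rwa [hmem, linearSubst_linearSubst_of_mul_eq_one K N M hNM]
    · obtain ⟨p, rfl⟩ := (primeDivisorEquiv hMN hNM hc).surjective p
      rw [ordAt_primeDivisorEquiv, ordAt_primeDivisorEquiv,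
        linearSubst_linearSubst_of_mul_eq_one K N M hNM,
        linearSubst_linearSubst_of_mul_eq_one K N M hNM, ← hD]
      exact happ D p
  · rintro ⟨f, g, d, hf, hg, hf0, hg0, hD⟩
    obtain ⟨D, rfl⟩ := (Finsupp.domCongr (primeDivisorEquiv hMN hNM hc)).surjective D
    refine ⟨D, ⟨linearSubst K M f, linearSubst K M g, d, hf.map_linearSubst K M,
      hg.map_linearSubst K M, (hmem f).not.1 hf0, (hmem g).not.1 hg0, fun p => ?_⟩, rfl⟩
    rw [← happ, hD, ordAt_primeDivisorEquiv, ordAt_primeDivisorEquiv]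

theorem nonempty_picX_addEquiv_of_linearSubst (hMN : M * N = 1) (hNM : N * M = 1)
    (hc : linearSubst K M (cubicBundlePolyK n c K) = cubicBundlePolyK n c' K) :
    Nonempty (PicX n c' K ≃+ PicX n c K) :=
  ⟨QuotientAddGroup.congr _ _ (Finsupp.domCongr (primeDivisorEquiv hMN hNM hc))
    (map_principalDivisors hMN hNM hc)⟩

end CoordinateChange

section AdaptedCoordinates

theorem exists_forall_dotProduct_eq {F ι κ : Type*} [Field F] [Fintype ι] [Fintype κ]
    {a : ι → κ → F} (ha : LinearIndependent F a) (t : ι → F) :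
    ∃ v : κ → F, ∀ i, ∑ k, a i k * v k = t i := by
  classical
  obtain ⟨g, hg⟩ := (Fintype.linearCombination F a).exists_leftInverse_of_injective
    (LinearMap.ker_eq_bot.2 (linearIndependent_iff_injective_fintypeLinearCombination.1 ha))
  refine ⟨fun k => ∑ i, g (Pi.single k 1) i * t i, fun i => ?_⟩
  have hi : g (a i) = Pi.single i 1 := by
    have := LinearMap.congr_fun hg (Pi.single i 1)
    simpa [Fintype.linearCombination_apply_single] using this
  rw [LinearMap.pi_apply_eq_sum_univ g (a i)] at hi
  calc ∑ k, a i k * ∑ i', g (Pi.single k 1) i' * t i'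
      = ∑ i', (∑ k, a i k • g (fun j => if k = j then 1 else 0)) i' * t i' := by
        simp only [Finset.sum_apply, Pi.smul_apply, smul_eq_mul, Finset.sum_mul, Finset.mul_sum,
          mul_assoc]
        rw [Finset.sum_comm]
        refine Finset.sum_congr rfl fun i' _ => Finset.sum_congr rfl fun k _ => ?_
        rw [show (Pi.single k 1 : κ → F) = fun j => if k = j then 1 else 0 from
          funext fun j => by simp [Pi.single_apply, eq_comm]]
    _ = t i := by rw [hi]; simp [Pi.single_apply]

theorem exists_invertible_matrix_col_eq {F ι κ : Type*} [Field F] [Fintype κ] [DecidableEq κ]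
    {v : ι → κ → F} (hv : LinearIndependent F v) :
    ∃ (M N : Matrix κ κ F) (e : ι → κ), M * N = 1 ∧ N * M = 1 ∧ Function.Injective e ∧
      ∀ i k, M k (e i) = v i k := by
  let b₀ := Module.Basis.extend hv.linearIndepOn_id
  let σ := b₀.indexEquiv (Pi.basisFun F κ)
  let b := b₀.reindex σ
  refine ⟨(Pi.basisFun F κ).toMatrix b, b.toMatrix (Pi.basisFun F κ),
    fun i => σ ⟨v i, Module.Basis.subset_extend hv.linearIndepOn_id ⟨i, rfl⟩⟩,
    Module.Basis.toMatrix_mul_toMatrix_flip _ _, Module.Basis.toMatrix_mul_toMatrix_flip _ _,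
    fun i i' h => hv.injective (congrArg Subtype.val (σ.injective h)), fun i k => ?_⟩
  simp [Module.Basis.toMatrix_apply, b, b₀]

/-- Two points on which four pairwise independent linear forms take sufficiently general values. -/
theorem exists_adapted_pair {F V : Type*} [Field F] [Infinite F] [AddCommGroup V] [Module F V]
    (L : Fin 4 → Module.Dual F V)
    (hL : ∀ i k, i ≠ k → ∃ v, L i v = 0 ∧ L k v ≠ 0) :
    ∃ v w, L 0 v = 1 ∧ L 1 v = 0 ∧ L 0 w = 0 ∧ L 1 w = 1 ∧ L 2 v ≠ 0 ∧ L 3 v ≠ 0 ∧ L 2 w ≠ 0 ∧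
      L 3 w ≠ 0 ∧ L 2 v * L 3 w - L 3 v * L 2 w ≠ 0 := by
  obtain ⟨⟨x, hx1⟩, hx⟩ := Module.Dual.exists_forall_ne_zero_of_forall_exists
    (fun k : Fin 3 => (L (![0, 2, 3] k)).domRestrict (LinearMap.ker (L 1))) fun k => by
      obtain ⟨v, hv1, hv⟩ := hL 1 (![0, 2, 3] k) (by fin_cases k <;> decide)
      exact ⟨⟨v, hv1⟩, hv⟩
  rw [LinearMap.mem_ker] at hx1
  have hx0 : L 0 x ≠ 0 := hx 0
  have hx2 : L 2 x ≠ 0 := hx 1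
  have hx3 : L 3 x ≠ 0 := hx 2
  obtain ⟨⟨y, hy0⟩, hy⟩ := Module.Dual.exists_forall_ne_zero_of_forall_exists
    (fun k : Fin 4 => (![L 1, L 2, L 3, L 2 x • L 3 - L 3 x • L 2] k).domRestrict
      (LinearMap.ker (L 0))) fun k => by
      suffices ∃ v, L 0 v = 0 ∧ ![L 1, L 2, L 3, L 2 x • L 3 - L 3 x • L 2] k v ≠ 0 from
        have ⟨v, hv0, hv⟩ := this
        ⟨⟨v, hv0⟩, hv⟩
      fin_cases k
      · exact hL 0 1 (by decide)
      · exact hL 0 2 (by decide)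
      · exact hL 0 3 (by decide)
      · obtain ⟨v, hv2, hv3⟩ := hL 2 3 (by decide)
        refine ⟨v - (L 0 v * (L 0 x)⁻¹) • x, ?_, ?_⟩
        · simp [hx0]
        · have : L 2 x * L 3 v ≠ 0 := mul_ne_zero hx2 hv3
          convert this using 1
          simp [hv2]
          ring
  rw [LinearMap.mem_ker] at hy0
  have hy1 : L 1 y ≠ 0 := hy 0
  have hy2 : L 2 y ≠ 0 := hy 1
  have hy3 : L 3 y ≠ 0 := hy 2
  have hy4 : L 2 x * L 3 y - L 3 x * L 2 y ≠ 0 := hy 3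
  refine ⟨(L 0 x)⁻¹ • x, (L 1 y)⁻¹ • y, ?_⟩
  simp only [map_smul, smul_eq_mul, hx1, hy0, mul_zero, inv_mul_cancel₀ hx0, inv_mul_cancel₀ hy1]
  refine ⟨trivial, trivial, trivial, trivial, by positivity, by positivity, by positivity,
    by positivity, ?_⟩
  convert mul_ne_zero (mul_ne_zero (inv_ne_zero hx0) (inv_ne_zero hy1)) hy4 using 1
  ring

variable {n} {c}

/-- After a linear change of coordinates the linear forms are adapted to two of them. -/
theorem exists_isAdapted (hn : 1 ≤ n)
    (hind : ∀ s : Finset (Fin 4), s.card = min (n + 1) 4 →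
      LinearIndependent ℚ (fun i : s => c i)) :
    ∃ (M N : Matrix (Fin (n + 1)) (Fin (n + 1)) ℚ) (j₀ j₁ : Fin (n + 1)), M * N = 1 ∧ N * M = 1 ∧
      IsAdapted (fun i j => ∑ k, c i k * M k j) j₀ j₁ := by
  let L : Fin 4 → Module.Dual ℚ (Fin (n + 1) → ℚ) := fun i =>
    LinearMap.proj i ∘ₗ (Matrix.of c).mulVecLin
  have hLapp : ∀ i v, L i v = ∑ k, c i k * v k := fun i v => rfl
  have hval : ∀ (T : Finset (Fin 4)), T.card ≤ min (n + 1) 4 → ∀ t : Fin 4 → ℚ,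
      ∃ v, ∀ i ∈ T, L i v = t i := by
    intro T hT t
    obtain ⟨s, hTs, hs⟩ := Finset.exists_superset_card_eq hT (by simp)
    obtain ⟨v, hv⟩ := exists_forall_dotProduct_eq (hind s hs) fun i => t i
    exact ⟨v, fun i hi => hv ⟨i, hTs hi⟩⟩
  obtain ⟨v, w, hv0, hv1, hw0, hw1, hv2, hv3, hw2, hw3, hdet⟩ := exists_adapted_pair L
    fun i k hik => by
      obtain ⟨v, hv⟩ := hval {i, k} (by rw [Finset.card_pair hik]; lia) (Pi.single k 1)
      exact ⟨v, by simp [hv i, hik], by simp [hv k]⟩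
  rcases hn.eq_or_lt with rfl | hn
  · have hli : LinearIndependent ℚ ![v, w] := by
      refine LinearIndependent.pair_iff.2 fun a b hab => ?_
      have h0 := congrArg (L 0) hab
      have h1 := congrArg (L 1) hab
      simp only [map_add, map_smul, hv0, hw0, hv1, hw1, smul_eq_mul, map_zero] at h0 h1
      constructor <;> linarith
    obtain ⟨M, N, e, hMN, hNM, he, hM⟩ := exists_invertible_matrix_col_eq hli
    have hcol : ∀ i m, ∑ k, c i k * M k (e m) = L i (![v, w] m) := fun i m => by
      simp only [hLapp, hM]
    refine ⟨M, N, e 0, e 1, hMN, hNM, he.ne (by decide), ?_, ?_, ?_, ?_, ?_, ?_, ?_, ?_, ?_,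
      Or.inl ?_⟩
    all_goals try simpa [hcol]
    have := he.ne (show (0 : Fin 2) ≠ 1 by decide)
    generalize e 0 = a, e 1 = b at this
    revert a b
    decide
  · obtain ⟨u, hu⟩ := hval {0, 1, 2} (Finset.card_le_three.trans (by lia)) (Pi.single 2 1)
    have hu0 : L 0 u = 0 := by simp [hu]
    have hu1 : L 1 u = 0 := by simp [hu]
    have hu2 : L 2 u = 1 := by simp [hu]
    have hli : LinearIndependent ℚ ![v, w, u] := by
      rw [Fintype.linearIndependent_iff]
      intro a ha
      rw [Fin.sum_univ_three] at ha
      have h0 := congrArg (L 0) ha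
      have h1 := congrArg (L 1) ha
      have h2 := congrArg (L 2) ha
      simp [hv0, hw0, hv1, hw1, hu0, hu1, hu2] at h0 h1 h2
      simp only [h0, h1, zero_mul, zero_add] at h2
      intro i
      fin_cases i
      exacts [h0, h1, h2]
    obtain ⟨M, N, e, hMN, hNM, he, hM⟩ := exists_invertible_matrix_col_eq hli
    have hcol : ∀ i m, ∑ k, c i k * M k (e m) = L i (![v, w, u] m) := fun i m => by
      simp only [hLapp, hM]
    refine ⟨M, N, e 0, e 1, hMN, hNM, he.ne (by decide), ?_, ?_, ?_, ?_, ?_, ?_, ?_, ?_, ?_,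
      Or.inr ⟨e 2, he.ne (by decide), he.ne (by decide), ?_, ?_, ?_⟩⟩
    all_goals simp only [hcol, Matrix.cons_val]
    all_goals first | assumption | simp [hu2]

end AdaptedCoordinates

/-- the Picard group of `X_{n+2}` over an arbitrary field containing `ℚ`
is isomorphic to `ℤ ⊕ ℤ`. -/
theorem picard_group_of_cubicBundle (hn : 1 ≤ n)
    (hind : ∀ s : Finset (Fin 4), s.card = min (n + 1) 4 →
      LinearIndependent ℚ (fun i : s => c i)) :
    Nonempty (PicX n c K ≃+ ℤ × ℤ) := by
  obtain ⟨M, N, j₀, j₁, hMN, hNM, h⟩ := exists_isAdapted hn hind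
  obtain ⟨φ⟩ := nonempty_picX_addEquiv_of_linearSubst hMN hNM (linearSubst_cubicBundlePolyK c K M)
  obtain ⟨ψ⟩ := h.nonempty_picX_addEquiv K
  exact ⟨φ.symm.trans ψ⟩

end
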